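/- Let q be an odd prime power and let f ∈ F_q[X] be a polynomial whose formal derivative f′ is not a constant polynomial. If G has an absolutely irreducible factor over F_q, then f is not exceptional planar. -/

import Mathlib

open Polynomial

/-- A function on a field of odd characteristic is planar if for every nonzero `ε`
the map `x ↦ f (x + ε) - f x` is a bijection. -/
def IsPlanarOdd {F : Type} [Field F] (f : F → F) : Prop :=
  ∀ ε : F, ε ≠ 0 → Function.Bijective (fun x : F => f (x + ε) - f x)

/-- A polynomial over a finite field `K` (of odd order) is exceptional planar if for
infinitely many positive integers `r` it induces a planar function on the extension
of `K` of degree `r`. -/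
def IsExceptionalPlanarOdd {K : Type} [Field K] [Fintype K] (f : K[X]) : Prop :=
  Set.Infinite {r : ℕ | 0 < r ∧ ∀ (L : Type) [Field L] [Fintype L] [Algebra K L],
      Fintype.card L = Fintype.card K ^ r →
      IsPlanarOdd (fun x : L => Polynomial.aeval x f)}

noncomputable section

/-- Evaluation of polynomials at `x0 + t` in the power series ring. -/
def psi {k : Type*} [Field k] (x0 : k) : k[X] →+* PowerSeries k :=
  eval₂RingHom (PowerSeries.C (R := k)) (PowerSeries.C x0 + PowerSeries.X)

lemma psi_eq_taylor {k : Type*} [Field k] (x0 : k) (f : k[X]) :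
    psi x0 f = ((taylor x0 f : k[X]) : PowerSeries k) := by
  have : psi x0 = (Polynomial.coeToPowerSeries.ringHom).comp (taylorAlgHom x0).toRingHom := by
    apply Polynomial.ringHom_ext
    · intro a; simp [psi]
    · simp [psi, add_comm]
  rw [this]; simp

lemma psi_constCoeff {k : Type*} [Field k] (x0 : k) (f : k[X]) :
    PowerSeries.constantCoeff (psi x0 f) = f.eval x0 := by
  rw [psi_eq_taylor]
  simp [taylor_coeff_zero]

lemma psi_C {k : Type*} [Field k] (x0 : k) (a : k) : psi x0 (C a) = PowerSeries.C a := by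
  simp [psi]

lemma psi_injective {k : Type*} [Field k] (x0 : k) : Function.Injective (psi x0) := by
  intro a b h
  rw [psi_eq_taylor, psi_eq_taylor] at h
  exact taylor_injective x0 (Polynomial.coe_injective k h)

lemma psi_dvd {k : Type*} [Field k] (x0 : k) (f : k[X]) (T : ℕ) (hT : f.natDegree < T)
    (h : (PowerSeries.X : PowerSeries k) ^ T ∣ psi x0 f) : f = 0 := by
  rw [psi_eq_taylor, PowerSeries.X_pow_dvd_iff] at h
  apply taylor_injective x0
  rw [map_zero]
  ext m
  by_cases hm : m < T
  · simpa using h m hm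
  · rw [coeff_zero, coeff_eq_zero_of_natDegree_lt]
    rw [natDegree_taylor]; omega

lemma hensel_ps {k : Type*} [Field k] (x0 y0 : k) (P : k[X][X]) (hP : P.Monic)
    (h0 : (P.map (evalRingHom x0)).eval y0 = 0)
    (h1 : (derivative (P.map (evalRingHom x0))).eval y0 ≠ 0) :
    ∃ Y : PowerSeries k, eval₂ (psi x0) Y P = 0 ∧ PowerSeries.constantCoeff Y = y0 := by
  have key : ∀ f : k[X][X], PowerSeries.constantCoeff ((f.map (psi x0)).eval (PowerSeries.C y0)) =
      (f.map (evalRingHom x0)).eval y0 := by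
    intro f
    rw [eval_map, eval_map, hom_eval₂]
    congr 1
    · ext <;> simp [psi]
  obtain ⟨a, ha, hb⟩ := HenselianRing.is_henselian (I := Ideal.span {(PowerSeries.X : PowerSeries k)})
    (P.map (psi x0)) (hP.map _) (PowerSeries.C y0)
    (by
      rw [Ideal.mem_span_singleton, PowerSeries.X_dvd_iff, key, h0])
    (by
      apply IsUnit.map
      rw [PowerSeries.isUnit_iff_constantCoeff, derivative_map, key, ← derivative_map]
      exact isUnit_iff_ne_zero.mpr h1)
  refine ⟨a, ?_, ?_⟩
  · rw [← eval_map]; exact ha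
  · rw [Ideal.mem_span_singleton, PowerSeries.X_dvd_iff] at hb
    simpa [sub_eq_zero] using hb

/-- all `Y`-coefficients have `X`-degree at most `B`. -/
def XB {k : Type*} [Field k] (W : k[X][X]) (B : ℕ) : Prop := ∀ i, (W.coeff i).natDegree ≤ B

lemma XB.mono {k : Type*} [Field k] {W : k[X][X]} {B B' : ℕ} (h : XB W B) (hB : B ≤ B') :
    XB W B' := fun i => (h i).trans hB

lemma XB.mul {k : Type*} [Field k] {W V : k[X][X]} {B B' : ℕ} (h : XB W B) (h' : XB V B') :
    XB (W * V) (B + B') := by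
  intro i
  rw [coeff_mul]
  apply natDegree_sum_le_of_forall_le
  intro x _
  exact natDegree_mul_le.trans (add_le_add (h _) (h' _))

lemma XB.add {k : Type*} [Field k] {W V : k[X][X]} {B : ℕ} (h : XB W B) (h' : XB V B) :
    XB (W + V) B := by
  intro i
  rw [coeff_add]
  exact natDegree_add_le_of_degree_le (h i) (h' i)

lemma XB.sub {k : Type*} [Field k] {W V : k[X][X]} {B : ℕ} (h : XB W B) (h' : XB V B) :
    XB (W - V) B := by
  intro i
  rw [coeff_sub]
  simpa using natDegree_sub_le_of_le (h i) (h' i)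

lemma XB.sum {k ι : Type*} [Field k] (s : Finset ι) {W : ι → k[X][X]} {B : ℕ}
    (h : ∀ i ∈ s, XB (W i) B) : XB (∑ i ∈ s, W i) B := by
  intro i
  rw [finsetSum_coeff]
  apply natDegree_sum_le_of_forall_le
  intro x hx
  exact h x hx i

lemma XB.C_mul_X_pow {k : Type*} [Field k] (a : k[X]) (n B : ℕ) (h : a.natDegree ≤ B) :
    XB (C a * X ^ n) B := by
  intro i
  rw [coeff_C_mul_X_pow]
  split_ifs
  · exact h
  · simp

lemma XB.modByMonic {k : Type*} [Field k] (P : k[X][X]) (hP : P.Monic) (D : ℕ) (hD : XB P D) :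
    ∀ (n B : ℕ) (W : k[X][X]), W.natDegree ≤ n → XB W B → XB (W %ₘ P) (B + n * D) := by
  intro n
  induction n with
  | zero =>
    intro B W hn hB
    by_cases hd : P.natDegree = 0
    · have : P = 1 := eq_one_of_monic_natDegree_zero hP hd
      subst this
      intro i; simp
    · rw [(modByMonic_eq_self_iff hP).mpr]
      · exact hB.mono (by omega)
      · exact degree_lt_degree (by omega)
  | succ n ih =>
    intro B W hn hB
    by_cases hd : W.natDegree < P.natDegree
    · rw [(modByMonic_eq_self_iff hP).mpr]
      · exact hB.mono (by omega)
      · exact degree_lt_degree hd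
    · push Not at hd
      set m := W.natDegree - P.natDegree with hm
      have e : W %ₘ P = (W - C (W.coeff W.natDegree) * X ^ m * P) %ₘ P := by
        rw [sub_modByMonic, (modByMonic_eq_zero_iff_dvd hP).mpr (dvd_mul_left P _), sub_zero]
      rw [e]
      have h2 : XB (W - C (W.coeff W.natDegree) * X ^ m * P) (B + D) :=
        XB.sub (hB.mono (by omega)) (XB.mul (XB.C_mul_X_pow _ _ _ (hB _)) hD)
      refine (ih (B + D) _ ?_ h2).mono (by ring_nf; omega)
      have h3 : (W - C (W.coeff W.natDegree) * X ^ m * P).natDegree ≤ W.natDegree - 1 := by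
        by_cases h0 : W.natDegree = 0
        · have : m = 0 := by omega
          have hP0 : P.natDegree = 0 := by omega
          have : P = 1 := eq_one_of_monic_natDegree_zero hP hP0
          rw [‹m = 0›, this]
          obtain ⟨c, hc⟩ := natDegree_eq_zero.mp h0
          rw [← hc]
          simp
        · rw [natDegree_le_iff_coeff_eq_zero]
          intro N hN
          rcases lt_or_eq_of_le (show W.natDegree ≤ N by omega) with h | h
          · rw [coeff_sub, coeff_eq_zero_of_natDegree_lt h, coeff_eq_zero_of_natDegree_lt, sub_zero]
            calc _ ≤ (C (W.coeff W.natDegree) * X ^ m).natDegree + P.natDegree := natDegree_mul_le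
              _ ≤ m + P.natDegree := by gcongr; exact natDegree_C_mul_X_pow_le _ _
              _ < N := by omega
          · subst h
            rw [coeff_sub, mul_assoc, coeff_C_mul]
            have : (X ^ m * P).coeff W.natDegree = 1 := by
              have : W.natDegree = P.natDegree + m := by omega
              rw [this, coeff_X_pow_mul]
              exact hP
            rw [this]; simp
      omega

/-- Linear independence over Frobenius twists. -/
lemma ps_indep {k ι κ : Type*} [Field k] [IsAlgClosed k] (p : ℕ) [Fact p.Prime] [CharP k p]
    [Fintype ι] [Fintype κ] (s : ι → PowerSeries k) (u : κ → PowerSeries k) (T n : ℕ)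
    (hT : T ≤ p ^ n) (hs : LinearIndependent k s)
    (hu : ∀ μ : κ → k, (PowerSeries.X : PowerSeries k) ^ T ∣ ∑ j, PowerSeries.C (μ j) * u j → μ = 0)
    (lam : ι → κ → k)
    (h : ∑ i, (∑ j, PowerSeries.C (lam i j) * u j) * s i ^ p ^ n = 0) : lam = 0 := by
  have : CharP (PowerSeries k) p := by
    apply charP_of_injective_ringHom (f := PowerSeries.C (R := k)) PowerSeries.C_injective
  have hp : p.Prime := Fact.out
  have key : ∀ m : ℕ, ∀ s : ι → PowerSeries k,
      ∑ i, (∑ j, PowerSeries.C (lam i j) * u j) * s i ^ p ^ n = 0 →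
      ∀ j, ∑ i, lam i j * (PowerSeries.coeff m (s i)) ^ p ^ n = 0 := by
    have step : ∀ s : ι → PowerSeries k,
      ∑ i, (∑ j, PowerSeries.C (lam i j) * u j) * s i ^ p ^ n = 0 → ∀ s' : ι → PowerSeries k, 
      (∀ i, s i = PowerSeries.C (PowerSeries.constantCoeff (s i)) + PowerSeries.X * s' i) →
      (∀ j, ∑ i, lam i j * (PowerSeries.constantCoeff (s i)) ^ p ^ n = 0) ∧ 
      ∑ i, (∑ j, PowerSeries.C (lam i j) * u j) * s' i ^ p ^ n = 0 := by
      intro s hs s' hs'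
      have e1 : ∀ i, s i ^ p ^ n = PowerSeries.C (PowerSeries.constantCoeff (s i) ^ p ^ n) +
          PowerSeries.X ^ p ^ n * s' i ^ p ^ n := by
        intro i
        conv_lhs => rw [hs' i]
        rw [add_pow_char_pow, mul_pow, map_pow]
      have e2 : ∑ i, (∑ j, PowerSeries.C (lam i j) * u j) * s i ^ p ^ n =
          ∑ j, PowerSeries.C (∑ i, lam i j * (PowerSeries.constantCoeff (s i)) ^ p ^ n) * u j +
          PowerSeries.X ^ p ^ n * ∑ i, (∑ j, PowerSeries.C (lam i j) * u j) * s' i ^ p ^ n := by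
        simp only [e1, mul_add, Finset.sum_add_distrib]
        congr 1
        · simp only [map_sum, Finset.sum_mul, map_mul]
          rw [Finset.sum_comm]
          refine Finset.sum_congr rfl fun j _ => Finset.sum_congr rfl fun i _ => ?_
          ring
        · rw [Finset.mul_sum]
          refine Finset.sum_congr rfl fun j _ => ?_
          ring
      rw [hs] at e2
      have e3 := hu (fun j => ∑ i, lam i j * (PowerSeries.constantCoeff (s i)) ^ p ^ n) (by
        rw [eq_neg_of_add_eq_zero_left e2.symm, dvd_neg]
        exact Dvd.dvd.mul_right (pow_dvd_pow _ hT) _)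
      have e4 := fun j => congrFun e3 j
      refine ⟨e4, ?_⟩
      simp only [e4, Pi.zero_apply, map_zero, zero_mul, Finset.sum_const_zero, zero_add] at e2
      exact (mul_eq_zero.mp e2.symm).resolve_left (pow_ne_zero _ PowerSeries.X_ne_zero)
    intro m
    induction m with
    | zero =>
      intro s hs j
      have := (step s hs (fun i => PowerSeries.mk fun n => PowerSeries.coeff (n+1) (s i)) (by
        intro i
        conv_lhs => rw [PowerSeries.eq_X_mul_shift_add_const (s i)]
        rw [add_comm])).1 j
      simpa using this
    | succ m ih =>
      intro s hs j
      have := ih _ (step s hs (fun i => PowerSeries.mk fun n => PowerSeries.coeff (n+1) (s i)) (by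
        intro i
        conv_lhs => rw [PowerSeries.eq_X_mul_shift_add_const (s i)]
        rw [add_comm])).2 j
      simpa using this
  have hroot : ∀ a : k, ∃ b, b ^ p ^ n = a := fun a =>
    IsAlgClosed.exists_pow_nat_eq a (pow_pos hp.pos n)
  choose rt hrt using hroot
  have : ∀ j, ∀ i, rt (lam i j) = 0 := by
    intro j
    apply Fintype.linearIndependent_iff.mp hs (fun i => rt (lam i j))
    ext m
    have h1 := key m s h j
    simp only [map_sum, map_zero, PowerSeries.coeff_smul]
    have h2 : (∑ i, rt (lam i j) * PowerSeries.coeff m (s i)) ^ p ^ n = 0 := by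
      rw [sum_pow_char_pow]
      simpa [mul_pow, hrt] using h1
    exact pow_eq_zero_iff (pow_pos hp.pos n).ne' |>.mp h2
  funext i j
  rw [← hrt (lam i j), this j i]
  simp [(hp.pos).ne']

/-- bounded order. -/
lemma order_bound {k : Type*} [Field k] (x0 : k) (Y : PowerSeries k) (P : k[X][X]) (hP : P.Monic)
    (hirr : Irreducible P) (D l : ℕ) (hD : XB P D) (hY : eval₂ (psi x0) Y P = 0)
    (v : k[X][X]) (hv : v.natDegree < P.natDegree) (hl : XB v l) 
    (hX : (PowerSeries.X : PowerSeries k) ^ (2 * P.natDegree * (D + l) + 1) ∣ eval₂ (psi x0) Y v) :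
    v = 0 := by
  by_contra hv0
  set d := P.natDegree with hd
  set e := v.natDegree with he
  obtain ⟨a, b, -, -, hab⟩ := exists_mul_add_mul_eq_C_resultant P v (m := d) (n := e) le_rfl le_rfl 
    (by left; omega)
  have hne : P.resultant v d e ≠ 0 := by
    have hinj := IsFractionRing.injective k[X] (FractionRing k[X])
    have h1 : Irreducible (P.map (algebraMap k[X] (FractionRing k[X]))) :=
      (Monic.irreducible_iff_irreducible_map_fraction_map hP).mp hirr
    have h2 : resultant (P.map (algebraMap k[X] (FractionRing k[X])))
      (v.map (algebraMap k[X] (FractionRing k[X]))) ≠ 0 := by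
      rw [Ne, resultant_eq_zero_iff]
      push Not
      intro _
      rw [h1.coprime_iff_not_dvd]
      intro h3
      have := natDegree_le_of_dvd h3 (by
        rw [Ne, Polynomial.map_eq_zero_iff hinj]; exact hv0)
      rw [natDegree_map_eq_of_injective hinj, natDegree_map_eq_of_injective hinj] at this
      omega
    rw [natDegree_map_eq_of_injective hinj, natDegree_map_eq_of_injective hinj, 
      resultant_map_map] at h2
    intro h
    apply h2
    rw [h, map_zero]
  have hdeg : (P.resultant v d e).natDegree ≤ 2 * d * (D + l) := by
    rw [resultant, Matrix.det_apply]
    apply natDegree_sum_le_of_forall_le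
    intro σ _
    refine (natDegree_smul_le _ _).trans ?_
    refine (natDegree_prod_le _ _).trans ?_
    calc _ ≤ ∑ i : Fin (d + e), (D + l) := by
          apply Finset.sum_le_sum
          intro i _
          simp only [sylvester, Matrix.of_apply]
          refine Fin.addCases (fun j => ?_) (fun j => ?_) i
          · simp only [Fin.addCases_left]
            split_ifs
            · exact (hl _).trans (by omega)
            · simp
          · simp only [Fin.addCases_right]
            split_ifs
            · exact (hD _).trans (by omega)
            · simp
      _ = (d + e) * (D + l) := by simp
      _ ≤ _ := by gcongr; omega
  apply hne
  apply psi_dvd x0 _ (2 * d * (D + l) + 1) (by omega)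
  have := congrArg (eval₂ (psi x0) Y) hab
  rw [eval₂_add, eval₂_mul, eval₂_mul, hY, zero_mul, zero_add, eval₂_C] at this
  rw [← this]
  exact Dvd.dvd.mul_right hX _

end

noncomputable section

lemma exists_fixed_finset {k : Type*} [Field k] [IsAlgClosed k] (p : ℕ) [Fact p.Prime] [CharP k p]
    (N : ℕ) (hN : N ≠ 0) : ∃ S : Finset k, S.card = p ^ N ∧ ∀ x, x ∈ S ↔ x ^ p ^ N = x := by
  classical
  have hp : p.Prime := Fact.out
  have h1 : 1 < p ^ N := Nat.one_lt_pow hN hp.one_lt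
  have hsep : (X ^ p ^ N - X : k[X]).Separable := by
    apply galois_poly_separable p
    exact dvd_pow_self p hN
  refine ⟨(X ^ p ^ N - X : k[X]).roots.toFinset, ?_, ?_⟩
  · rw [Multiset.toFinset_card_of_nodup (nodup_roots hsep),
      ← (IsAlgClosed.splits (X ^ p ^ N - X : k[X])).natDegree_eq_card_roots,
      FiniteField.X_pow_card_sub_X_natDegree_eq k h1]
  · intro x
    rw [Multiset.mem_toFinset, mem_roots (FiniteField.X_pow_card_sub_X_ne_zero k h1)]
    simp [sub_eq_zero]

/-- polynomial with given coefficients -/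
def mk2 {k : Type*} [Field k] (A d : ℕ) (μ : Fin A × Fin d → k) : k[X][X] :=
  ∑ i, C (C (μ i)) * (C (X ^ (i.1 : ℕ)) * X ^ (i.2 : ℕ))

lemma mk2_coeff {k : Type*} [Field k] (A d : ℕ) (μ : Fin A × Fin d → k) (i : Fin A × Fin d) :
    ((mk2 A d μ).coeff i.2).coeff i.1 = μ i := by
  rw [mk2]
  simp only [finsetSum_coeff, coeff_C_mul, coeff_X_pow]
  rw [Finset.sum_eq_single i]
  · simp
  · intro j _ hj
    by_cases h : (i.2 : ℕ) = j.2
    · rw [if_pos h, mul_one, coeff_X_pow, if_neg]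
      · simp
      · intro h'
        exact hj (Prod.ext (Fin.ext h'.symm) (Fin.ext h.symm))
    · simp [h]
  · simp

lemma mk2_eq_zero {k : Type*} [Field k] (A d : ℕ) (μ : Fin A × Fin d → k) (h : mk2 A d μ = 0) :
    μ = 0 := by
  funext i
  rw [← mk2_coeff A d μ i, h]; simp

lemma mk2_XB {k : Type*} [Field k] (A d : ℕ) (μ : Fin A × Fin d → k) : XB (mk2 A d μ) A := by
  apply XB.sum
  intro i _
  rw [← mul_assoc, ← C_mul]
  apply XB.C_mul_X_pow
  refine (natDegree_C_mul_X_pow_le _ _).trans i.1.2.le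

lemma mk2_natDegree {k : Type*} [Field k] (A d : ℕ) (hd : 0 < d) (μ : Fin A × Fin d → k) :
    (mk2 A d μ).natDegree < d := by
  have : (mk2 A d μ).natDegree ≤ d - 1 := by
    apply natDegree_sum_le_of_forall_le
    intro i _
    rw [← mul_assoc, ← C_mul]
    refine (natDegree_C_mul_X_pow_le _ _).trans (by have := i.2.2; omega)
  omega

lemma siegel {k idx J : Type*} [Field k] [Fintype idx] [Fintype J] (P : k[X][X]) (hP : P.Monic)
    (B : ℕ) (w : J → idx → k[X][X]) (hw : ∀ j i, XB (w j i %ₘ P) B)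
    (hc : Fintype.card J * P.natDegree * (B + 1) < Fintype.card idx) :
    ∃ ν : idx → k, ν ≠ 0 ∧ ∀ j, P ∣ ∑ i, C (C (ν i)) * w j i := by
  let Λ : (idx → k) →ₗ[k] (J × Fin P.natDegree × Fin (B + 1) → k) :=
    { toFun := fun ν r => ∑ i, ν i * ((w r.1 i %ₘ P).coeff r.2.1).coeff r.2.2
      map_add' := by intro a b; funext r; simp [add_mul, Finset.sum_add_distrib]
      map_smul' := by intro a b; funext r; simp [Finset.mul_sum, mul_assoc] }
  have h1 : LinearMap.ker Λ ≠ ⊥ := by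
    apply LinearMap.ker_ne_bot_of_finrank_lt
    simp only [Module.finrank_fintype_fun_eq_card, Fintype.card_prod, Fintype.card_fin]
    rwa [← mul_assoc]
  obtain ⟨ν, hν, hν0⟩ := Submodule.exists_mem_ne_zero_of_ne_bot h1
  refine ⟨ν, hν0, fun j => ?_⟩
  rw [← modByMonic_eq_zero_iff_dvd hP]
  have e : (∑ i, C (C (ν i)) * w j i) %ₘ P = ∑ i, C (C (ν i)) * (w j i %ₘ P) := by
    rw [← modByMonicHom_apply, map_sum]
    refine Finset.sum_congr rfl fun i _ => ?_
    rw [← smul_eq_C_mul, ← smul_eq_C_mul, map_smul, modByMonicHom_apply]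
  have hdeg : ((∑ i, C (C (ν i)) * w j i) %ₘ P) ≠ 0 →
    ((∑ i, C (C (ν i)) * w j i) %ₘ P).natDegree < P.natDegree := by
    intro h0
    apply natDegree_lt_natDegree h0
    exact degree_modByMonic_lt _ hP
  by_contra hne
  have hdeg := hdeg hne
  apply hne
  ext a b
  rw [coeff_zero, coeff_zero]
  by_cases ha : a < P.natDegree
  · by_cases hb : b < B + 1
    · have := congrFun (LinearMap.mem_ker.mp hν) (j, ⟨a, ha⟩, ⟨b, hb⟩)
      rw [e]
      simpa [Λ, finsetSum_coeff] using this
    · apply coeff_eq_zero_of_natDegree_lt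
      have : XB ((∑ i, C (C (ν i)) * w j i) %ₘ P) B := by
        rw [e]
        apply XB.sum
        intro i _ n
        rw [coeff_C_mul]
        exact (natDegree_C_mul_le _ _).trans (hw j i n)
      have := this a
      omega
  · rw [coeff_eq_zero_of_natDegree_lt (lt_of_lt_of_le hdeg (not_lt.mp ha)), coeff_zero]

lemma divX_iter_coeff {k : Type*} [CommRing k] (P : k[X]) (j n : ℕ) :
    (divX^[j] P).coeff n = P.coeff (n + j) := by
  induction j generalizing n with
  | zero => simp
  | succ j ih => rw [Function.iterate_succ_apply', coeff_divX, ih]; congr 1; ring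

/-- The divided difference of a polynomial. -/
lemma quot_identity {R k : Type*} [CommRing R] [CommRing k] (φ : R →+* k) (P : R[X]) (hP : P.Monic)
    (y y' : k) :
    (y' - y) * ∑ j ∈ Finset.range P.natDegree, (eval₂ φ y (divX^[j+1] P)) * y' ^ j =
      eval₂ φ y' P - eval₂ φ y P := by
  have hrec : ∀ j, eval₂ φ y (divX^[j] P) = eval₂ φ y (divX^[j+1] P) * y + φ (P.coeff j) := by
    intro j
    conv_lhs => rw [← divX_mul_X_add (divX^[j] P)]
    rw [eval₂_add, eval₂_mul, eval₂_X, eval₂_C, ← Function.iterate_succ_apply' divX,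
      divX_iter_coeff, zero_add]
  have key : ∀ m, (y' - y) * ∑ j ∈ Finset.range m, (eval₂ φ y (divX^[j+1] P)) * y' ^ j =
      eval₂ φ y (divX^[m] P) * y' ^ m - eval₂ φ y P
        + ∑ j ∈ Finset.range m, φ (P.coeff j) * y' ^ j := by
    intro m
    induction m with
    | zero => simp
    | succ m ih =>
      rw [Finset.sum_range_succ, mul_add, ih, Finset.sum_range_succ, hrec m]
      ring
  rw [key]
  have h1 : divX^[P.natDegree] P = 1 := by
    ext n
    rw [divX_iter_coeff, coeff_one]
    split_ifs with h
    · subst h; rw [zero_add]; exact hP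
    · apply coeff_eq_zero_of_natDegree_lt; omega
  rw [h1, eval₂_one, eval₂_eq_sum_range φ y', Finset.sum_range_succ]
  have : P.coeff P.natDegree = 1 := hP
  rw [this, map_one]; ring

lemma ev_nonvanish {k : Type*} [Field k] [IsAlgClosed k] (p : ℕ) [Fact p.Prime] [CharP k p]
    (P : k[X][X]) (hP : P.Monic) (hd : 0 < P.natDegree) (D : ℕ) (hD : XB P D) (hirr : Irreducible P)
    (x0 y0 : k) 
    (h0 : (P.map (evalRingHom x0)).eval y0 = 0)
    (h1 : (derivative (P.map (evalRingHom x0))).eval y0 ≠ 0)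
    (A l n : ℕ) (hn : 2 * P.natDegree * (D + l) + 1 ≤ p ^ n)
    (lam : (Fin A × Fin P.natDegree) → (Fin l × Fin P.natDegree) → k)
    (hdvd : P ∣ ∑ i, mk2 l P.natDegree (lam i) * 
      (C (X ^ (i.1 : ℕ)) * X ^ (i.2 : ℕ)) ^ p ^ n) : lam = 0 := by
  obtain ⟨Y, hY, -⟩ := hensel_ps x0 y0 P hP h0 h1
  let φ : k[X][X] →+* PowerSeries k := eval₂RingHom (psi x0) Y
  have hφC : ∀ a : k, φ (C (C a)) = PowerSeries.C a := by intro a; simp [φ, psi_C]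
  have hφ : ∀ B (μ : Fin B × Fin P.natDegree → k), 
      ∑ j, PowerSeries.C (μ j) * φ (C (X ^ (j.1 : ℕ)) * X ^ (j.2 : ℕ)) = φ (mk2 B _ μ) := by
    intro B μ
    rw [mk2, map_sum]
    refine Finset.sum_congr rfl fun j _ => ?_
    rw [map_mul φ (C (C (μ j))), hφC]
  apply ps_indep p (fun i : Fin A × Fin P.natDegree => φ (C (X ^ (i.1 : ℕ)) * X ^ (i.2 : ℕ))) 
    (fun i : Fin l × Fin P.natDegree => φ (C (X ^ (i.1 : ℕ)) * X ^ (i.2 : ℕ))) _ n hn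
  · rw [Fintype.linearIndependent_iff]
    intro g hg
    have : φ (mk2 A _ g) = 0 := by
      rw [← hφ, ← hg]
      refine Finset.sum_congr rfl fun j _ => ?_
      rw [PowerSeries.smul_eq_C_mul]
    have := order_bound x0 Y P hP hirr D A hD hY (mk2 A _ g) (mk2_natDegree _ _ hd _) (mk2_XB _ _ _)
      (by change _ ∣ φ _; rw [this]; exact dvd_zero _)
    exact congrFun (mk2_eq_zero _ _ _ this)
  · intro μ hμ
    rw [hφ] at hμ
    exact mk2_eq_zero _ _ _ (order_bound x0 Y P hP hirr D l hD hY (mk2 l _ μ)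
      (mk2_natDegree _ _ hd _) (mk2_XB _ _ _) hμ)
  · obtain ⟨c, hc⟩ := hdvd
    have := congrArg φ hc
    rw [map_mul, map_sum] at this
    have hP0 : φ P = 0 := hY
    rw [hP0, zero_mul] at this
    rw [← this]
    refine Finset.sum_congr rfl fun i _ => ?_
    rw [map_mul φ (mk2 _ _ _), hφ, map_pow φ]

end

noncomputable section

/-- Existence of the auxiliary polynomial, with vanishing at all points `(x,y)` with
`x` rational and `y` not rational. -/
lemma aux_exists {k : Type*} [Field k] [IsAlgClosed k] (p : ℕ) [Fact p.Prime] [CharP k p]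
    (P : k[X][X]) (hP : P.Monic) (hd : 0 < P.natDegree) (D : ℕ) (hD : XB P D)
    (A l μ n : ℕ)
    (hfix : P.map (mapRingHom (iterateFrobenius k p (μ + n))) = P)
    (hcount : (P.natDegree - 1) * P.natDegree * 
      ((l * p ^ μ + A + D) + (P.natDegree * p ^ μ + P.natDegree) * D + 1) <
        A * P.natDegree * (l * P.natDegree)) :
    ∃ lam : (Fin A × Fin P.natDegree) → (Fin l × Fin P.natDegree) → k, lam ≠ 0 ∧
      ∀ x y : k, x ^ p ^ (μ + n) = x → y ^ p ^ (μ + n) ≠ y → 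
        eval₂ (evalRingHom x) y P = 0 → 
        eval₂ (evalRingHom x) y (∑ i, mk2 l P.natDegree (lam i) * 
          (C (X ^ (i.1 : ℕ)) * X ^ (i.2 : ℕ)) ^ p ^ n) = 0 := by
  have hp : p.Prime := Fact.out
  set d := P.natDegree with hdd
  set M := p ^ μ with hM
  have hMpos : 0 < M := pow_pos hp.pos _
  let w : Fin (d - 1) → ((Fin A × Fin d) × (Fin l × Fin d)) → k[X][X] := fun j i =>
    C (X ^ ((i.2.1 : ℕ) * M + i.1.1)) * X ^ ((i.2.2 : ℕ) * M) * 
      (if (i.1.2 : ℕ) = j then 1 else if (i.1.2 : ℕ) = d - 1 then - divX^[(j:ℕ)+1] P else 0)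
  have hw : ∀ j i, XB (w j i %ₘ P) ((l * M + A + D) + (d * M + d) * D) := by
    intro j i
    apply XB.modByMonic P hP D hD
    · refine natDegree_mul_le.trans (add_le_add ?_ ?_)
      · refine (natDegree_C_mul_X_pow_le _ _).trans ?_
        gcongr
        exact i.2.2.2.le
      · split_ifs
        · simp
        · rw [natDegree_neg, natDegree_le_iff_coeff_eq_zero]
          intro N hN
          rw [divX_iter_coeff]
          apply coeff_eq_zero_of_natDegree_lt
          omega
        · simp
    · apply XB.mul
      · apply XB.C_mul_X_pow
        rw [natDegree_X_pow]
        gcongr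
        · exact i.2.1.2.le
        · exact i.1.1.2.le
      · split_ifs
        · intro i; rw [coeff_one]; split_ifs <;> simp
        · intro i; rw [coeff_neg, natDegree_neg, divX_iter_coeff]; exact hD _
        · intro i; simp
  obtain ⟨ν, hν0, hν⟩ := siegel P hP _ w hw (by
    simp only [Fintype.card_prod, Fintype.card_fin]
    exact hcount)
  have hroot : ∀ a : k, ∃ b, b ^ M = a := fun a =>
    IsAlgClosed.exists_pow_nat_eq a hMpos
  choose rt hrt using hroot
  refine ⟨fun i j => rt (ν (i, j)), ?_, ?_⟩
  · intro h
    apply hν0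
    funext i
    have := congrFun (congrFun h i.1) i.2
    rw [← hrt (ν i)]
    simp only [Pi.zero_apply] at this
    rw [this, zero_pow hMpos.ne']; rfl
  · intro x y hx hy hxy
    set y' := y ^ p ^ (μ + n) with hy'
    have hroot' : eval₂ (evalRingHom x) y' P = 0 := by
      have h1 : iterateFrobenius k p (μ + n) (eval₂ (evalRingHom x) y P) = 0 := by rw [hxy, map_zero]
      rw [hom_eval₂] at h1
      conv_lhs => rw [← hfix]
      rw [eval₂_map]
      rw [iterateFrobenius_def] at h1
      have hcomp : (evalRingHom x).comp (mapRingHom (iterateFrobenius k p (μ + n))) =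
          (iterateFrobenius k p (μ + n)).comp (evalRingHom x) := by
        apply Polynomial.ringHom_ext
        · intro a; simp [iterateFrobenius_def]
        · simp [iterateFrobenius_def, hx]
      rw [hcomp]
      exact h1
    have hq : ∑ j ∈ Finset.range d, (eval₂ (evalRingHom x) y (divX^[j+1] P)) * y' ^ j = 0 := by
      have := quot_identity (evalRingHom x) P hP y y'
      rw [hxy, hroot', sub_zero, mul_eq_zero] at this
      exact this.resolve_left (sub_ne_zero.mpr hy)
    have hlast : eval₂ (evalRingHom x) y (divX^[d - 1 + 1] P) = 1 := by
      have h1 : divX^[d - 1 + 1] P = 1 := by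
        ext1 n
        rw [divX_iter_coeff, coeff_one]
        split_ifs with h
        · subst h; rw [zero_add, show d - 1 + 1 = d by omega]; exact hP
        · apply coeff_eq_zero_of_natDegree_lt; omega
      rw [h1, eval₂_one]
    rw [show d = (d - 1) + 1 by omega, Finset.sum_range_succ, hlast, one_mul] at hq
    -- key vanishing
    have hvan : ∑ i, ν i * (x ^ ((i.2.1 : ℕ) * M + i.1.1) * y ^ ((i.2.2 : ℕ) * M) * y' ^ (i.1.2 : ℕ)) = 0 := by
      have h2 : ∀ j, ∑ i, ν i * eval₂ (evalRingHom x) y (w j i) = 0 := by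
        intro j
        obtain ⟨c, hc⟩ := hν j
        have := congrArg (eval₂ (evalRingHom x) y) hc
        rw [eval₂_mul, hxy, zero_mul, eval₂_finsetSum] at this
        rw [← this]
        refine Finset.sum_congr rfl fun i _ => ?_
        symm
        refine (eval₂_mul (evalRingHom x) y).trans ?_
        rw [eval₂_C]; simp
      have h3 : ∑ j : Fin (d - 1), y' ^ (j : ℕ) * ∑ i, ν i * eval₂ (evalRingHom x) y (w j i) = 0 := by
        simp [h2]
      rw [← h3]
      simp only [Finset.mul_sum]
      rw [Finset.sum_comm]
      refine Finset.sum_congr rfl fun i _ => ?_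
      have h4 : ∀ j : Fin (d - 1), y' ^ (j : ℕ) * (ν i * eval₂ (evalRingHom x) y (w j i)) = 
        ν i * (x ^ ((i.2.1 : ℕ) * M + i.1.1) * y ^ ((i.2.2 : ℕ) * M)) * 
          (if (i.1.2 : ℕ) = j then y' ^ (j : ℕ) else if (i.1.2 : ℕ) = d - 1 then 
            - (eval₂ (evalRingHom x) y (divX^[(j:ℕ)+1] P) * y' ^ (j : ℕ)) else 0) := by
        intro j
        simp only [w]
        rw [eval₂_mul, eval₂_mul, eval₂_C, eval₂_X_pow]
        split_ifs
        · simp; ring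
        · rw [eval₂_neg]; simp; ring
        · simp
      rw [Finset.sum_congr rfl fun j _ => h4 j, ← Finset.mul_sum, ← mul_assoc]
      congr 1
      by_cases hb : (i.1.2 : ℕ) = d - 1
      · rw [hb]
        have h5 : ∀ j : Fin (d - 1), (if d - 1 = (j : ℕ) then y' ^ (j : ℕ) else if d - 1 = d - 1 then 
            - (eval₂ (evalRingHom x) y (divX^[(j:ℕ)+1] P) * y' ^ (j : ℕ)) else 0) = 
            - (eval₂ (evalRingHom x) y (divX^[(j:ℕ)+1] P) * y' ^ (j : ℕ)) := by
          intro j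
          rw [if_neg (by have := j.2; omega), if_pos rfl]
        rw [Finset.sum_congr rfl fun j _ => h5 j, Finset.sum_neg_distrib,
          Fin.sum_univ_eq_sum_range (fun j => eval₂ (evalRingHom x) y (divX^[(j:ℕ)+1] P) * y' ^ (j : ℕ))]
        rw [eq_neg_iff_add_eq_zero, add_comm]
        exact hq
      · have hlt : (i.1.2 : ℕ) < d - 1 := by have := i.1.2.2; omega
        rw [Finset.sum_eq_single ⟨(i.1.2 : ℕ), hlt⟩]
        · simp
        · intro j _ hj
          rw [if_neg, if_neg hb]
          intro h
          exact hj (Fin.ext h.symm)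
        · simp
    -- conclude
    have hpow : (eval₂ (evalRingHom x) y (∑ i : Fin A × Fin d, mk2 l d (fun j => rt (ν (i, j))) * 
          (C (X ^ (i.1 : ℕ)) * X ^ (i.2 : ℕ)) ^ p ^ n)) ^ M = 0 := by
      rw [← hvan]
      conv_rhs => rw [Fintype.sum_prod_type]
      rw [eval₂_finsetSum, hM, sum_pow_char_pow]
      refine Finset.sum_congr rfl fun i _ => ?_
      rw [mk2, Finset.sum_mul, eval₂_finsetSum, sum_pow_char_pow]
      refine Finset.sum_congr rfl fun j _ => ?_
      simp only [eval₂_mul, eval₂_C, eval₂_pow, eval₂_X, coe_evalRingHom, eval_C, eval_pow, eval_X]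
      rw [mul_pow, mul_pow, ← hM, hrt, ← pow_mul (x ^ (i.1 : ℕ) * y ^ (i.2 : ℕ)), hM, ← pow_add, 
        add_comm n μ, mul_pow (x ^ (i.1 : ℕ)), ← pow_mul x, ← pow_mul y, mul_comm (i.1 : ℕ),
        mul_comm (i.2 : ℕ), pow_mul x, pow_mul y, hx, ← hy']
      ring
    exact pow_eq_zero_iff hMpos.ne' |>.mp hpow

lemma stepanov_arith (p d D c : ℕ) (hp : 2 ≤ p) (hd : 0 < d) :
    ∃ A l μ n0, (d - 1) * d * ((l * p ^ μ + A + D) + (d * p ^ μ + d) * D + 1) < A * d * (l * d) ∧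
      ∀ n ≥ n0, 2 * d * (D + l) + 1 ≤ p ^ n ∧ 
        (l + A * p ^ n) + (d + d * p ^ n) * D + c < p ^ (μ + n) := by
  set l := 2 * d * (2 + D + 2 * d * D) + 1 with hl
  obtain ⟨μ, hμ⟩ : ∃ μ, 2 * d * (d * D + 1) ≤ p ^ μ := ⟨_, (Nat.lt_pow_self (by omega)).le⟩
  set M := p ^ μ with hM
  set h := M / (2 * d) with hh
  have h1 : d * D + 1 ≤ h := (Nat.le_div_iff_mul_le (by omega)).mpr (by linarith)
  have h2 : h * (2 * d) ≤ M := Nat.div_mul_le_self _ _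
  obtain ⟨A, hA⟩ : ∃ A, M = A + h := ⟨M - h, by have : h ≤ M := Nat.div_le_self _ _; omega⟩
  refine ⟨A, l, μ, 2 * d * (D + l) + 1 + (c + l + d * D), ?_, ?_⟩
  · obtain ⟨e, rfl⟩ : ∃ e, d = e + 1 := ⟨d - 1, by omega⟩
    rw [Nat.add_sub_cancel]
    have hM1 : 1 ≤ M := by nlinarith
    have hkey : e * ((l * M + A + D) + ((e + 1) * M + (e + 1)) * D + 1) < A * l * (e + 1) := by
      have hA2 : (2 * e + 1) * M ≤ 2 * (e + 1) * A := by nlinarith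
      have hAM : A ≤ M := by omega
      have b1 : e * ((l * M + A + D) + ((e + 1) * M + (e + 1)) * D + 1) ≤ 
          e * l * M + e * M * (2 + D + 2 * (e + 1) * D) := by
        have : (l * M + A + D) + ((e + 1) * M + (e + 1)) * D + 1 ≤ 
          l * M + M * (2 + D + 2 * (e + 1) * D) := by nlinarith [Nat.zero_le D, Nat.zero_le (e * D), Nat.mul_le_mul_left D hM1, Nat.mul_le_mul_left (e * D) hM1]
        calc _ ≤ e * (l * M + M * (2 + D + 2 * (e + 1) * D)) := Nat.mul_le_mul_left _ this
          _ = _ := by ring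
      have b2 : 2 * (e * l * M + e * M * (2 + D + 2 * (e + 1) * D)) < (2 * e + 1) * M * l := by
        have : 2 * e * (2 + D + 2 * (e + 1) * D) < l := by rw [hl]; nlinarith
        nlinarith
      have b3 : (2 * e + 1) * M * l ≤ 2 * (e + 1) * A * l := Nat.mul_le_mul_right _ hA2
      nlinarith
    calc _ = (e + 1) * (e * ((l * M + A + D) + ((e + 1) * M + (e + 1)) * D + 1)) := by ring
      _ < (e + 1) * (A * l * (e + 1)) := by gcongr
      _ = _ := by ring
  · intro n hn
    have h3 : n < p ^ n := Nat.lt_pow_self (by omega)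
    refine ⟨by omega, ?_⟩
    rw [pow_add, ← hM, hA]
    set q := p ^ n
    have : (d * D + 1) * q ≤ h * q := Nat.mul_le_mul_right _ h1
    nlinarith

theorem stepanov {k : Type*} [Field k] [IsAlgClosed k] (p : ℕ) [Fact p.Prime] [CharP k p]
    (d D c : ℕ) (hd : 0 < d) : ∃ N0 : ℕ, ∀ N ≥ N0, ∀ P : k[X][X], P.Monic → P.natDegree = d →
      XB P D → Irreducible P → P.map (mapRingHom (iterateFrobenius k p N)) = P →
      ∀ β : k[X], β ≠ 0 → β.natDegree ≤ c →
      (∀ x, β.eval x ≠ 0 → (P.map (evalRingHom x)).Separable) →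
      ∃ x y, x ^ p ^ N = x ∧ y ^ p ^ N = y ∧ β.eval x ≠ 0 ∧ eval₂ (evalRingHom x) y P = 0 := by
  classical
  have hp : p.Prime := Fact.out
  obtain ⟨A, l, μ, n0, hcount, hn0⟩ := stepanov_arith p d D c hp.two_le hd
  refine ⟨μ + n0 + 1, fun N hN P hP hPd hD hirr hfix β hβ hβd hsep => ?_⟩
  obtain ⟨n, rfl⟩ : ∃ n, N = μ + n := ⟨N - μ, by omega⟩
  obtain ⟨hn1, hn2⟩ := hn0 n (by omega)
  subst hPd
  by_contra hcon
  push Not at hcon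
  obtain ⟨lam, hlam, hvan⟩ := aux_exists p P hP hd D hD A l μ n hfix hcount
  obtain ⟨E, hE⟩ : ∃ E, E = ∑ i, mk2 l P.natDegree (lam i) * 
          (C (X ^ (i.1 : ℕ)) * X ^ (i.2 : ℕ)) ^ p ^ n := ⟨_, rfl⟩
  rw [← hE] at hvan
  -- base point
  obtain ⟨x0, hx0⟩ : ∃ x0, β.eval x0 ≠ 0 := by
    by_contra h
    push Not at h
    exact hβ (Polynomial.funext (by simpa using h))
  have hdeg : ∀ x, (P.map (evalRingHom x)).natDegree = P.natDegree := fun x => hP.natDegree_map _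
  obtain ⟨y0, hy0⟩ := IsAlgClosed.exists_root (P.map (evalRingHom x0)) (by
    rw [Polynomial.degree_eq_natDegree (hP.map _).ne_zero, hdeg]
    exact_mod_cast hd.ne')
  have hE0 : E %ₘ P ≠ 0 := by
    rw [Ne, modByMonic_eq_zero_iff_dvd hP, hE]
    intro h
    exact hlam (ev_nonvanish p P hP hd D hD hirr x0 y0 hy0 
      (by simpa using (hsep x0 hx0).eval₂_derivative_ne_zero (RingHom.id k) (x := y0)
            (by simpa using hy0)) A l n hn1 lam h)
  obtain ⟨i, hi⟩ : ∃ i, (E %ₘ P).coeff i ≠ 0 := by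
    by_contra h
    push Not at h
    exact hE0 (Polynomial.ext (by simpa using h))
  have hEdeg : E.natDegree ≤ P.natDegree + P.natDegree * p ^ n := by
    rw [hE]
    apply natDegree_sum_le_of_forall_le
    intro j _
    refine natDegree_mul_le.trans (add_le_add (mk2_natDegree _ _ hd _).le ?_)
    refine natDegree_pow_le.trans ?_
    rw [mul_comm]
    gcongr
    exact (natDegree_C_mul_X_pow_le _ _).trans j.2.2.le
  have hEX : XB E (l + A * p ^ n) := by
    rw [hE]
    apply XB.sum
    intro j _
    apply XB.mul (mk2_XB _ _ _)
    have h8 : (C (X ^ (j.1 : ℕ)) * X ^ (j.2 : ℕ) : k[X][X]) ^ p ^ n =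
        C (X ^ ((j.1 : ℕ) * p ^ n)) * X ^ ((j.2 : ℕ) * p ^ n) := by
      rw [mul_pow, ← C_pow, ← pow_mul, ← pow_mul]
    rw [h8]
    apply XB.C_mul_X_pow
    rw [natDegree_X_pow]
    exact Nat.mul_le_mul_right _ j.1.2.le
  have hb := XB.modByMonic P hP D hD _ _ E hEdeg hEX i
  obtain ⟨S, hS, hSm⟩ := exists_fixed_finset (k := k) p (μ + n) (by omega)
  have hsub : S ⊆ ((E %ₘ P).coeff i * β).roots.toFinset := by
    intro x hx
    rw [hSm] at hx
    rw [Multiset.mem_toFinset, mem_roots (mul_ne_zero hi hβ), IsRoot, eval_mul]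
    by_cases hbx : β.eval x = 0
    · rw [hbx, mul_zero]
    · suffices h : (E %ₘ P).map (evalRingHom x) = 0 by
        have := congrArg (fun f => f.coeff i) h
        simp only [coeff_map, coeff_zero, coe_evalRingHom] at this
        rw [this, zero_mul]
      have hs := hsep x hbx
      have hspl := IsAlgClosed.splits (P.map (evalRingHom x))
      apply Polynomial.eq_zero_of_natDegree_lt_card_of_eval_eq_zero' _
        (P.map (evalRingHom x)).roots.toFinset
      · intro y hy
        rw [Multiset.mem_toFinset, mem_roots (hP.map _).ne_zero, IsRoot, eval_map] at hy
        rw [eval_map]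
        have h6 := hvan x y hx (fun h => hcon x y hx h hbx hy) hy
        have h7 := congrArg (eval₂ (evalRingHom x) y) (modByMonic_add_div E P)
        rw [eval₂_add, eval₂_mul, hy, zero_mul, add_zero, h6] at h7
        exact h7
      · rw [Multiset.toFinset_card_of_nodup (nodup_roots hs), ← hspl.natDegree_eq_card_roots, hdeg]
        refine lt_of_le_of_lt natDegree_map_le ?_
        exact natDegree_modByMonic_lt _ hP (by intro h; rw [h] at hd; simp at hd)
  have hcard := Finset.card_le_card hsub
  have h5 : ((E %ₘ P).coeff i * β).roots.toFinset.card ≤ 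
      ((E %ₘ P).coeff i).natDegree + β.natDegree :=
    (Multiset.toFinset_card_le _).trans ((card_roots' _).trans natDegree_mul_le)
  omega

end

noncomputable section

lemma XB.exists {k : Type*} [Field k] (W : k[X][X]) : ∃ B, XB W B := by
  refine ⟨W.support.sup fun i => (W.coeff i).natDegree, fun i => ?_⟩
  by_cases h : i ∈ W.support
  · exact Finset.le_sup (f := fun i => (W.coeff i).natDegree) h
  · rw [notMem_support_iff.mp h]; simp

lemma mk2_self {k : Type*} [Field k] (A d : ℕ) (g : k[X][X]) (hd : g.natDegree < d)
    (hA : ∀ i, (g.coeff i).natDegree < A) :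
    mk2 A d (fun i => (g.coeff i.2).coeff i.1) = g := by
  rw [mk2, Fintype.sum_prod_type, Finset.sum_comm]
  conv_rhs => rw [g.as_sum_range' d hd, Finset.sum_range]
  refine Finset.sum_congr rfl fun j _ => ?_
  rw [← C_mul_X_pow_eq_monomial]
  conv_rhs => rw [(g.coeff j).as_sum_range' A (hA j), Finset.sum_range, map_sum, Finset.sum_mul]
  refine Finset.sum_congr rfl fun i _ => ?_
  rw [← C_mul_X_pow_eq_monomial, C_mul, mul_assoc]

lemma eval_mk2 {k : Type*} [Field k] (A d : ℕ) (x0 : k) (Y : PowerSeries k)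
    (μ : Fin A × Fin d → k) :
    eval₂ (psi x0) Y (mk2 A d μ) =
      ∑ i, PowerSeries.C (μ i) * (psi x0 X ^ (i.1 : ℕ) * Y ^ (i.2 : ℕ)) := by
  rw [mk2, eval₂_finsetSum]
  refine Finset.sum_congr rfl fun i _ => ?_
  rw [eval₂_mul, eval₂_mul, eval₂_C, eval₂_C, eval₂_X_pow, psi_C, map_pow]

lemma psi_map {K L : Type*} [Field K] [Field L] (φ : K →+* L) (x0 : K) :
    (PowerSeries.map φ).comp (psi x0) = (psi (φ x0)).comp (mapRingHom φ) := by
  apply Polynomial.ringHom_ext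
  · intro a; simp [psi]
  · simp [psi]

lemma descend {K L : Type*} [Field K] [Field L] [Algebra K L] (x0 : K) (Y : PowerSeries K)
    (P : K[X][X]) (hP : P.Monic) (hirr : Irreducible P) (hY : eval₂ (psi x0) Y P = 0)
    (g : L[X][X]) (hg : g.Monic)
    (hgY : eval₂ (psi (algebraMap K L x0)) (PowerSeries.map (algebraMap K L) Y) g = 0) :
    P.natDegree ≤ g.natDegree := by
  by_contra hlt
  push Not at hlt
  obtain ⟨θ, hθ⟩ := LinearMap.exists_leftInverse_of_injective (Algebra.linearMap K L)
    (LinearMap.ker_eq_bot.mpr (algebraMap K L).injective)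
  have hθ1 : θ 1 = 1 := by
    have := LinearMap.congr_fun hθ 1
    simpa using this
  obtain ⟨B, hB⟩ := XB.exists g
  obtain ⟨D, hD⟩ := XB.exists P
  set d := g.natDegree with hd
  set μ : Fin (B+1) × Fin (d+1) → L := fun i => (g.coeff i.2).coeff i.1 with hμ
  have hgs : mk2 (B+1) (d+1) μ = g := mk2_self _ _ g (by omega) fun i => Nat.lt_succ_of_le (hB i)
  have hv := order_bound x0 Y P hP hirr D (B+1) hD hY (mk2 (B+1) (d+1) (fun i => θ (μ i)))
    (by have := mk2_natDegree (B+1) (d+1) (by omega) (fun i => θ (μ i)); omega) (mk2_XB _ _ _) (by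
      convert dvd_zero _
      rw [← hgs, eval_mk2] at hgY
      rw [eval_mk2]
      ext n
      have h1 := congrArg (fun s => θ (PowerSeries.coeff n s)) hgY
      simp only [map_sum, map_zero, PowerSeries.coeff_C_mul] at h1 ⊢
      rw [← h1]
      refine Finset.sum_congr rfl fun i _ => ?_
      have h2 : psi (algebraMap K L x0) X ^ (i.1 : ℕ) *
          (PowerSeries.map (algebraMap K L)) Y ^ (i.2 : ℕ) =
          PowerSeries.map (algebraMap K L) (psi x0 X ^ (i.1 : ℕ) * Y ^ (i.2 : ℕ)) := by
        have := RingHom.congr_fun (psi_map (algebraMap K L) x0) X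
        simp only [RingHom.comp_apply, coe_mapRingHom, map_X] at this
        rw [map_mul, map_pow, map_pow, this]
      rw [h2, PowerSeries.coeff_map, mul_comm (μ i), ← Algebra.smul_def, map_smul, smul_eq_mul,
        mul_comm])
  have h3 := mk2_eq_zero _ _ _ hv
  have h4 := congrFun h3 (⟨0, by omega⟩, ⟨d, by omega⟩)
  simp only [hμ, Pi.zero_apply] at h4
  have h5 : g.coeff d = 1 := hg
  rw [h5] at h4
  simp [hθ1] at h4

lemma gen_factor {k K L : Type*} [Field k] [IsAlgClosed k] [Field K] [Field L] [Algebra K L]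
    (φ : k →+* K) (P : K[X][X]) (hP : P.Monic) (hirr : Irreducible P) (x0 : K) (Q0 : k[X])
    (hQ0 : Q0.Separable) (hx0 : P.map (evalRingHom x0) = Q0.map φ) :
    Irreducible (P.map (mapRingHom (algebraMap K L))) := by
  have hd : 0 < P.natDegree := by
    rcases Nat.eq_zero_or_pos P.natDegree with h | h
    · exact absurd ((hP.natDegree_eq_zero).mp h) (by rintro rfl; exact hirr.1 isUnit_one)
    · exact h
  set ι := algebraMap K L with hι
  set Q := P.map (mapRingHom ι) with hQ
  have hQm : Q.Monic := hP.map _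
  have hQd : Q.natDegree = P.natDegree := hP.natDegree_map _
  have hQx : Q.map (evalRingHom (ι x0)) = Q0.map (ι.comp φ) := by
    rw [← Polynomial.map_map, ← hx0, hQ, Polynomial.map_map, Polynomial.map_map]
    congr 1
    apply Polynomial.ringHom_ext
    · intro a; simp
    · simp
  rw [hQm.irreducible_iff_natDegree']
  refine ⟨?_, ?_⟩
  · intro h; rw [h] at hQd; simp at hQd; omega
  intro h g hh hg hgh hgd
  rw [Finset.mem_Ioc] at hgd
  have hdeg : g.natDegree < P.natDegree := by omega
  set gx := g.map (evalRingHom (ι x0)) with hgx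
  set hx := h.map (evalRingHom (ι x0)) with hhx
  have hmul : hx * gx = Q0.map (ι.comp φ) := by
    rw [← hQx, ← hgh, Polynomial.map_mul]
  have hQ0ne : Q0.map (ι.comp φ) ≠ 0 := by
    rw [← hQx]; exact (hQm.map _).ne_zero
  have hspl : (Q0.map (ι.comp φ)).Splits := (IsAlgClosed.splits Q0).map _
  have hgspl : gx.Splits := hspl.of_dvd hQ0ne ⟨hx, by rw [mul_comm, hmul]⟩
  obtain ⟨a, ha⟩ := hgspl.exists_eval_eq_zero (by
    rw [degree_eq_natDegree (hg.map _).ne_zero, hg.natDegree_map]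
    exact_mod_cast hgd.1.ne')
  have hQa : (Q0.map (ι.comp φ)).IsRoot a := by
    rw [IsRoot, ← hmul, eval_mul, ha, mul_zero]
  obtain ⟨y0, rfl⟩ := (IsAlgClosed.splits Q0).mem_range_of_isRoot
    (by rintro rfl; simp at hQ0ne) hQa
  have hy0 : Q0.eval y0 = 0 := by
    rw [IsRoot, eval_map, eval₂_at_apply] at hQa
    exact (map_eq_zero _).mp hQa
  have hy1 : (derivative Q0).eval y0 ≠ 0 := by
    simpa using hQ0.eval₂_derivative_ne_zero (RingHom.id k) (x := y0) (by simpa using hy0)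
  have hhne : hx.eval ((ι.comp φ) y0) ≠ 0 := by
    intro hc
    have h1 := congrArg (fun s => (derivative s).eval ((ι.comp φ) y0)) hmul
    simp only [derivative_mul, eval_add, eval_mul, hc, ha, mul_zero, zero_mul, add_zero,
      derivative_map, eval_map, eval₂_at_apply] at h1
    exact hy1 ((map_eq_zero _).mp h1.symm)
  obtain ⟨Y, hY, hYc⟩ := hensel_ps x0 (φ y0) P hP
    (by rw [hx0, eval_map, eval₂_at_apply, hy0, map_zero])
    (by rw [hx0, derivative_map, eval_map, eval₂_at_apply]; rwa [Ne, map_eq_zero])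
  have hYL : eval₂ (psi (ι x0)) (PowerSeries.map ι Y) Q = 0 := by
    have := congrArg (PowerSeries.map ι) hY
    rw [hom_eval₂, map_zero, psi_map] at this
    rw [hQ, eval₂_map]; exact this
  rw [← hgh, eval₂_mul, mul_eq_zero] at hYL
  have hgY := hYL.resolve_left (by
    intro hc
    apply hhne
    have h1 := congrArg (PowerSeries.constantCoeff) hc
    rw [hom_eval₂, map_zero] at h1
    have h2 : (PowerSeries.constantCoeff).comp (psi (ι x0)) = evalRingHom (ι x0) := by
      refine RingHom.ext fun a => ?_
      simpa using psi_constCoeff _ _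
    have h3 : PowerSeries.constantCoeff (PowerSeries.map ι Y) = (ι.comp φ) y0 := by
      rw [← PowerSeries.coeff_zero_eq_constantCoeff_apply, PowerSeries.coeff_map,
        PowerSeries.coeff_zero_eq_constantCoeff_apply, hYc]; rfl
    rw [h2, h3] at h1
    rw [hhx, eval_map]; exact h1)
  exact absurd (descend x0 Y P hP hirr hY g hg hgY) (by omega)

lemma generic_irred {k L : Type*} [Field k] [IsAlgClosed k] [Field L]
    (P : k[X][X][X]) (hP : P.Monic) (hirr : Irreducible P) (x0 : k) (Q0 : k[X])
    (hQ0 : Q0.Separable) (hx0 : P.map (evalRingHom (C x0)) = Q0.map C)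
    (ι : k[X] →+* L) (hι : Function.Injective ι) :
    Irreducible (P.map (mapRingHom ι)) := by
  let K := FractionRing k[X]
  let F := FractionRing k[X][X]
  let j : k[X] →+* K := algebraMap _ _
  let _ : Algebra K L := (IsFractionRing.lift hι : K →+* L).toAlgebra
  have hιj : ι = (algebraMap K L).comp j := by
    refine RingHom.ext fun a => ?_
    simp [j, RingHom.algebraMap_toAlgebra]
  have hF : Irreducible (P.map (algebraMap k[X][X] F)) :=
    (hP.irreducible_iff_irreducible_map_fraction_map (K := F)).mp hirr
  have hCinj : Function.Injective ((algebraMap k[X][X] F).comp (C : k[X] →+* k[X][X])) :=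
    (IsFractionRing.injective k[X][X] F).comp C_injective
  let τ : K[X] →+* F := eval₂RingHom (IsFractionRing.lift hCinj) (algebraMap k[X][X] F X)
  have hτ : τ.comp (mapRingHom j) = algebraMap k[X][X] F := by
    apply Polynomial.ringHom_ext
    · intro a; simp [τ, j]
    · simp [τ]
  have hK : Irreducible (P.map (mapRingHom j)) := by
    apply Monic.irreducible_of_irreducible_map τ _ (hP.map _)
    rwa [Polynomial.map_map, hτ]
  have := gen_factor (L := L) (j.comp C) (P.map (mapRingHom j)) (hP.map _) hK (j (C x0)) Q0 hQ0 (by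
    rw [← Polynomial.map_map, ← hx0, Polynomial.map_map, Polynomial.map_map]
    congr 1
    apply Polynomial.ringHom_ext
    · intro a; simp
    · simp)
  rw [Polynomial.map_map] at this
  rw [hιj]
  convert this using 2
  apply Polynomial.ringHom_ext
  · intro a; simp
  · simp

end

noncomputable section

lemma swap_coeff_coeff {R : Type*} [CommRing R] (p : R[X][X]) (i j : ℕ) :
    ((Bivariate.swap p).coeff i).coeff j = (p.coeff j).coeff i := by
  induction p using Polynomial.induction_on' with
  | add p q hp hq => simp [hp, hq]
  | monomial n f =>
    induction f using Polynomial.induction_on' with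
    | add p q hp hq => simp only [map_add, coeff_add, hp, hq]
    | monomial m r =>
      rw [Bivariate.swap_monomial_monomial]
      simp only [coeff_monomial]
      by_cases h1 : m = i <;> by_cases h2 : n = j <;> simp [h1, h2, coeff_monomial]

lemma XB_iff_swap {k : Type*} [Field k] (W : k[X][X]) (B : ℕ) :
    XB W B ↔ (Bivariate.swap W).natDegree ≤ B := by
  constructor
  · intro h
    rw [natDegree_le_iff_coeff_eq_zero]
    intro N hN
    ext j
    rw [swap_coeff_coeff, coeff_zero]
    exact coeff_eq_zero_of_natDegree_lt (lt_of_le_of_lt (h j) hN)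
  · intro h i
    rw [natDegree_le_iff_coeff_eq_zero]
    intro N hN
    rw [← swap_coeff_coeff, coeff_eq_zero_of_natDegree_lt (lt_of_le_of_lt h hN), coeff_zero]

lemma XB.of_dvd {k : Type*} [Field k] {W V : k[X][X]} {B : ℕ} (h : XB (W * V) B)
    (hW : W ≠ 0) (hV : V ≠ 0) : XB W B ∧ XB V B := by
  rw [XB_iff_swap, map_mul, natDegree_mul (by simpa using hW) (by simpa using hV)] at h
  rw [XB_iff_swap, XB_iff_swap]
  omega

/-- Bundle a bounded family of bivariate polynomials into a single one over the product ring. -/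
lemma bundle {k I : Type*} [Field k] (g : I → k[X][X]) (B e : ℕ) (hB : ∀ w, XB (g w) B)
    (hg : ∀ w, (g w).Monic) (he : ∀ w, (g w).natDegree = e) :
    ∃ G : (I → k)[X][X], G.coeff e = 1 ∧ G.natDegree ≤ e ∧
      ∀ w, G.map (mapRingHom (Pi.evalRingHom (fun _ => k) w)) = g w := by
  let G : (I → k)[X][X] := ∑ j ∈ Finset.range (e + 1),
    C (∑ i ∈ Finset.range (B + 1), C (fun w => ((g w).coeff j).coeff i) * X ^ i) * X ^ j
  have hc : ∀ j i w, ((G.coeff j).coeff i) w = ((g w).coeff j).coeff i := by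
    intro j i w
    have hGj : G.coeff j = if j ∈ Finset.range (e + 1) then
        ∑ i ∈ Finset.range (B + 1), C (fun w => ((g w).coeff j).coeff i) * X ^ i else 0 := by
      rw [← Finset.sum_ite_eq (Finset.range (e + 1)) j (fun j =>
        ∑ i ∈ Finset.range (B + 1), C (fun w => ((g w).coeff j).coeff i) * X ^ i)]
      simp only [G]
      rw [finsetSum_coeff]
      exact Finset.sum_congr rfl fun b _ => coeff_C_mul_X_pow _ _ _
    rw [hGj]
    split_ifs with h
    · simp only [finsetSum_coeff, coeff_C_mul_X_pow]
      rw [Finset.sum_ite_eq]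
      split_ifs with h'
      · rfl
      · rw [coeff_eq_zero_of_natDegree_lt]; · rfl
        have := hB w j
        simp at h'; omega
    · rw [coeff_eq_zero_of_natDegree_lt (p := g w)]; · simp
      have := he w
      simp at h; omega
  refine ⟨G, ?_, ?_, ?_⟩
  · ext i : 1
    funext w
    rw [hc, ← he w, (hg w).coeff_natDegree, coeff_one, coeff_one]
    split_ifs <;> rfl
  · rw [natDegree_le_iff_coeff_eq_zero]
    intro N hN
    ext i : 1
    funext w
    rw [hc, coeff_eq_zero_of_natDegree_lt (p := g w) (by rw [he w]; exact hN)]; simp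
  · intro w
    ext j i
    simp [hc]

lemma pi_ext {k I : Type*} [Field k] (A B : (I → k)[X][X])
    (h : ∀ w, A.map (mapRingHom (Pi.evalRingHom (fun _ => k) w)) =
      B.map (mapRingHom (Pi.evalRingHom (fun _ => k) w))) : A = B := by
  ext j i : 2
  funext w
  have := congrArg (fun p => (p.coeff j).coeff i) (h w)
  simpa using this

lemma XB.map_eval {k : Type*} [Field k] (P : k[X][X][X]) :
    ∃ D, ∀ w : k, XB (P.map (mapRingHom (evalRingHom w))) D := by
  refine ⟨P.support.sup fun i => (P.coeff i).natDegree, fun w i => ?_⟩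
  rw [coeff_map]
  refine natDegree_map_le.trans ?_
  by_cases h : i ∈ P.support
  · exact Finset.le_sup (f := fun i => (P.coeff i).natDegree) h
  · rw [notMem_support_iff.mp h]; simp

lemma finite_bad {k : Type*} [Field k] [IsAlgClosed k]
    (P : k[X][X][X]) (hP : P.Monic) (hirr : Irreducible P) (x0 : k) (Q0 : k[X])
    (hQ0 : Q0.Separable) (hx0 : P.map (evalRingHom (C x0)) = Q0.map C) :
    {w : k | ¬ Irreducible (P.map (mapRingHom (evalRingHom w)))}.Finite := by
  classical
  by_contra hinf
  rw [← Set.not_infinite, not_not] at hinf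
  have hP1 : P ≠ 1 := by rintro rfl; exact hirr.1 isUnit_one
  have hPd : P.natDegree ≠ 0 := fun h => hP1 (hP.natDegree_eq_zero.mp h)
  obtain ⟨D, hD⟩ := XB.map_eval P
  have hfac : ∀ w : {w : k | ¬ Irreducible (P.map (mapRingHom (evalRingHom w)))},
      ∃ h g : k[X][X], h.Monic ∧ g.Monic ∧ h * g = P.map (mapRingHom (evalRingHom w.1)) ∧
        h.natDegree ≠ 0 ∧ g.natDegree ≠ 0 := by
    rintro ⟨w, hw⟩
    have hm : (P.map (mapRingHom (evalRingHom w))).Monic := hP.map _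
    rw [Set.mem_ofPred_eq, hm.irreducible_iff_natDegree] at hw
    push Not at hw
    exact hw (by
      intro h1
      have := hP.natDegree_map (mapRingHom (evalRingHom w))
      rw [h1, natDegree_one] at this
      exact hPd this.symm)
  choose h g hh hg hhg hh0 hg0 using hfac
  have hsum : ∀ w, (h w).natDegree + (g w).natDegree = P.natDegree := by
    intro w
    rw [← (hh w).natDegree_mul (hg w), hhg, hP.natDegree_map]
  have hI : Infinite {w : k | ¬ Irreducible (P.map (mapRingHom (evalRingHom w)))} :=
    hinf.to_subtype
  obtain ⟨e, heinf⟩ := Finite.exists_infinite_fiber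
    (fun w => (⟨(g w).natDegree, by have := hsum w; omega⟩ : Fin (P.natDegree + 1)))
  set I := ((fun w => (⟨(g w).natDegree, by have := hsum w; omega⟩ : Fin (P.natDegree + 1))) ⁻¹' {e})
    with hIdef
  have hge : ∀ w : I, (g w.1).natDegree = (e : ℕ) := by
    intro w
    exact congrArg Fin.val (show _ = e from w.2)
  obtain ⟨w0⟩ : Nonempty I := inferInstance
  have he0 : (e : ℕ) ≠ 0 := by rw [← hge w0]; exact hg0 _
  have heP : (e : ℕ) < P.natDegree := by
    have := hsum w0.1; have := hh0 w0.1; have := hge w0; omega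
  have hhe : ∀ w : I, (h w.1).natDegree = P.natDegree - e := by
    intro w; have := hsum w.1; have := hge w; omega
  have hXB : ∀ w : I, XB (h w.1) D ∧ XB (g w.1) D := by
    intro w
    apply XB.of_dvd _ (hh w.1).ne_zero (hg w.1).ne_zero
    rw [hhg]; exact hD _
  obtain ⟨G, hG1, hG2, hG3⟩ := bundle (fun w : I => g w.1) D e (fun w => (hXB w).2)
    (fun w => hg _) hge
  obtain ⟨H, hH1, hH2, hH3⟩ := bundle (fun w : I => h w.1) D (P.natDegree - e) (fun w => (hXB w).1)
    (fun w => hh _) hhe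
  let ε : k[X] →+* (I → k) := RingHom.pi fun w => evalRingHom w.1.1
  have hHG : H * G = P.map (mapRingHom ε) := by
    apply pi_ext
    intro w
    rw [Polynomial.map_mul, hH3, hG3, hhg, Polynomial.map_map]
    congr 1
    apply Polynomial.ringHom_ext
    · intro a; simp [ε]
    · simp
  have hεinj : ∀ f, ε f = 0 → f = 0 := by
    intro f hf
    by_contra hf0
    have hinj : Function.Injective (fun w : I => w.1.1) := fun a b hab => Subtype.ext (Subtype.ext hab)
    refine (Set.infinite_range_of_injective hinj) (Set.Finite.subset (f.roots.toFinset.finite_toSet) ?_)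
    rintro _ ⟨w, rfl⟩
    simp only [Finset.mem_coe, Multiset.mem_toFinset]
    rw [mem_roots hf0]
    exact congrFun hf w
  let S : Submonoid (I → k) := (nonZeroDivisors k[X]).map ε
  obtain ⟨𝔭, hprime, -, hdis⟩ := Ideal.exists_le_prime_disjoint (⊥ : Ideal (I → k)) S (by
    rw [Set.disjoint_left]
    rintro x hx ⟨f, hf, rfl⟩
    have : ε f = 0 := by simpa using hx
    exact nonZeroDivisors.ne_zero hf (hεinj f this))
  let L := FractionRing ((I → k) ⧸ 𝔭)
  let ρ : (I → k) →+* L := (algebraMap ((I → k) ⧸ 𝔭) L).comp (Ideal.Quotient.mk 𝔭)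
  have hinjL : Function.Injective (ρ.comp ε) := by
    rw [injective_iff_map_eq_zero]
    intro f hf
    by_contra hf0
    have h1 : Ideal.Quotient.mk 𝔭 (ε f) = 0 := by
      apply IsFractionRing.injective ((I → k) ⧸ 𝔭) L
      rw [map_zero]; exact hf
    rw [Ideal.Quotient.eq_zero_iff_mem] at h1
    exact Set.disjoint_left.mp hdis h1 ⟨f, mem_nonZeroDivisors_of_ne_zero hf0, rfl⟩
  have hfin := generic_irred P hP hirr x0 Q0 hQ0 hx0 (ρ.comp ε) hinjL
  have hmonic : ∀ (A : (I → k)[X][X]) (n : ℕ), A.coeff n = 1 → A.natDegree ≤ n →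
      (A.map (mapRingHom ρ)).Monic ∧ (A.map (mapRingHom ρ)).natDegree = n := by
    intro A n h1 h2
    have hmon : A.Monic := monic_of_natDegree_le_of_coeff_eq_one n h2 h1
    refine ⟨hmon.map _, ?_⟩
    apply natDegree_eq_of_le_of_coeff_ne_zero (natDegree_map_le.trans h2)
    rw [coeff_map, h1]; simp
  obtain ⟨hG4, hG5⟩ := hmonic G e hG1 hG2
  obtain ⟨hH4, hH5⟩ := hmonic H _ hH1 hH2
  have hm : (P.map (mapRingHom (ρ.comp ε))).Monic := hP.map _
  rw [hm.irreducible_iff_natDegree] at hfin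
  have := hfin.2 _ _ hH4 hG4 (by
    rw [← Polynomial.map_mul, hHG, Polynomial.map_map]
    congr 1
    apply Polynomial.ringHom_ext
    · intro a; simp
    · simp)
  omega

end

noncomputable section

lemma iterFrob_fix {k : Type*} [Field k] (p : ℕ) [Fact p.Prime] [CharP k p] (a r : ℕ)
    (H : k[X][X][X])
    (h : H.map (mapRingHom (mapRingHom (iterateFrobenius k p a))) = H) :
    H.map (mapRingHom (mapRingHom (iterateFrobenius k p (a * r)))) = H := by
  induction r with
  | zero =>
    ext i j l
    simp
  | succ r ih =>
    conv_rhs => rw [← ih]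
    conv_rhs => rw [← h]
    rw [Polynomial.map_map]
    have hcomp : iterateFrobenius k p (a * (r + 1)) =
        (iterateFrobenius k p (a * r)).comp (iterateFrobenius k p a) := by
      refine RingHom.ext fun b => ?_
      simp only [RingHom.comp_apply, iterateFrobenius_def]
      rw [← pow_mul, ← pow_add, mul_add, mul_one, add_comm]
    congr 1
    apply Polynomial.ringHom_ext
    · intro b
      simp [hcomp]
    · simp

theorem thmA {k : Type*} [Field k] [IsAlgClosed k] (p : ℕ) [Fact p.Prime] [CharP k p]
    (halg : ∀ x : k, ∃ s, 0 < s ∧ x ^ p ^ s = x) (a : ℕ) (ha : 0 < a)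
    (H : k[X][X][X]) (hH : H.Monic) (hirr : Irreducible H)
    (hfix : H.map (mapRingHom (mapRingHom (iterateFrobenius k p a))) = H)
    (β : k[X][X]) (hβ : β ≠ 0)
    (hsep : ∀ x z : k, evalEvalRingHom x z β ≠ 0 → (H.map (evalEvalRingHom x z)).Separable) :
    ∃ N0 : ℕ, ∀ r ≥ N0, ∃ x z y : k, x ^ p ^ (a * r) = x ∧ z ^ p ^ (a * r) = z ∧
      y ^ p ^ (a * r) = y ∧ evalEvalRingHom x z β ≠ 0 ∧
      eval₂ (evalEvalRingHom x z) y H = 0 := by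
  classical
  have hp : p.Prime := Fact.out
  have hd : 0 < H.natDegree := by
    rcases Nat.eq_zero_or_pos H.natDegree with h | h
    · exact absurd (hH.natDegree_eq_zero.mp h) (by rintro rfl; exact hirr.1 isUnit_one)
    · exact h
  -- choice of the curve
  obtain ⟨n, hn⟩ : ∃ n : ℕ, β.eval (X ^ n) ≠ 0 := by
    by_contra hc
    push Not at hc
    have hinj : Function.Injective (fun n : ℕ => (X ^ n : k[X])) := by
      intro u v huv
      have := congrArg natDegree huv
      simpa using this
    refine (Set.infinite_range_of_injective hinj)
      (Set.Finite.subset (β.roots.toFinset.finite_toSet) ?_)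
    rintro _ ⟨w, rfl⟩
    simp only [Finset.mem_coe, Multiset.mem_toFinset]
    rw [mem_roots hβ]
    exact hc w
  obtain ⟨x0, hx0⟩ : ∃ x0, (β.eval (X ^ n)).eval x0 ≠ 0 := by
    by_contra h
    push Not at h
    exact hn (Polynomial.funext (by simpa using h))
  obtain ⟨s, hs, hxs⟩ := halg x0
  obtain ⟨m, hm⟩ : ∃ m : k[X], m = X ^ p ^ s - X := ⟨_, rfl⟩
  have hm0 : m ≠ 0 := by
    rw [hm]
    exact FiniteField.X_pow_card_sub_X_ne_zero k (Nat.one_lt_pow hs.ne' hp.one_lt)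
  have hmx0 : m.eval x0 = 0 := by rw [hm]; simp [hxs]
  have hmN : ∀ N, m.map (iterateFrobenius k p N) = m := by intro N; rw [hm]; simp
  let σ : k[X][X] →+* k[X][X] :=
    eval₂RingHom (mapRingHom C) (X ^ n + C X * m.map C)
  have hσC : ∀ b, σ (C b) = b.map C := by intro b; simp [σ]
  have hσX : σ X = X ^ n + C X * m.map C := by simp [σ]
  obtain ⟨P, hPdef⟩ : ∃ P, P = H.map σ := ⟨_, rfl⟩
  have hP : P.Monic := by rw [hPdef]; exact hH.map _
  -- specialization
  have hspec : ∀ w, (mapRingHom (evalRingHom w)).comp σ = evalRingHom (X ^ n + C w * m) := by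
    intro w
    apply Polynomial.ringHom_ext
    · intro b
      rw [RingHom.comp_apply, hσC, coe_mapRingHom, Polynomial.map_map]
      have : (evalRingHom w).comp C = RingHom.id k := by ext; simp
      rw [this]; simp
    · rw [RingHom.comp_apply, hσX]
      have : (evalRingHom w).comp C = RingHom.id k := by ext; simp
      simp [Polynomial.map_map, this]
  have hPw : ∀ w, P.map (mapRingHom (evalRingHom w)) = H.map (evalRingHom (X ^ n + C w * m)) := by
    intro w
    rw [hPdef, Polynomial.map_map, hspec]
  have hPirr : Irreducible P := by
    let F := FractionRing k[X][X]
    have hF : Irreducible (H.map (algebraMap k[X][X] F)) :=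
      (hH.irreducible_iff_irreducible_map_fraction_map (K := F)).mp hirr
    let ρ : k[X][X] →+* F := eval₂RingHom
      (eval₂RingHom ((algebraMap k[X][X] F).comp (C.comp C))
        (algebraMap k[X][X] F (X - C (X ^ n)) / algebraMap k[X][X] F (C m)))
      (algebraMap k[X][X] F (C X))
    have hne : algebraMap k[X][X] F (C m) ≠ 0 := by
      rw [Ne, map_eq_zero_iff _ (IsFractionRing.injective _ _), C_eq_zero]
      exact hm0
    have hρC : ∀ b : k[X], ρ (b.map C) = algebraMap k[X][X] F (C b) := by
      intro b
      have : ρ.comp (mapRingHom C) = (algebraMap k[X][X] F).comp C := by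
        apply Polynomial.ringHom_ext
        · intro c; simp [ρ]
        · simp [ρ]
      exact RingHom.congr_fun this b
    have hρσ : ρ.comp σ = algebraMap k[X][X] F := by
      apply Polynomial.ringHom_ext
      · intro b
        rw [RingHom.comp_apply, hσC, hρC]
      · rw [RingHom.comp_apply, hσX, map_add, map_mul, hρC]
        have h1 : ρ (C X) = algebraMap k[X][X] F (X - C (X ^ n)) / algebraMap k[X][X] F (C m) := by
          simp only [ρ, coe_eval₂RingHom, eval₂_C, eval₂_X]
        have h2 : ρ X = algebraMap k[X][X] F (C X) := by
          simp only [ρ, coe_eval₂RingHom, eval₂_X]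
        rw [h1, map_pow, h2, div_mul_cancel₀ _ hne, map_sub, C_pow, map_pow]
        ring
    apply Monic.irreducible_of_irreducible_map ρ _ hP
    rwa [hPdef, Polynomial.map_map, hρσ]
  have hev0 : evalEvalRingHom x0 (x0 ^ n) β = (β.eval (X ^ n)).eval x0 := by
    have : evalEvalRingHom x0 (x0 ^ n) = (evalRingHom x0).comp (evalRingHom (X ^ n : k[X])) := by
      apply Polynomial.ringHom_ext
      · intro b; simp
      · simp
    rw [this]; rfl
  have hbad := finite_bad P hP hPirr x0 (H.map (evalEvalRingHom x0 (x0 ^ n)))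
    (hsep _ _ (by rw [hev0]; exact hx0)) (by
      rw [hPdef, Polynomial.map_map, Polynomial.map_map]
      congr 1
      apply Polynomial.ringHom_ext
      · intro b
        rw [RingHom.comp_apply, hσC]
        simp [eval_map, eval₂_at_apply]
      · rw [RingHom.comp_apply, hσX]
        simp [eval_map, eval₂_at_apply, hmx0])
  obtain ⟨D, hD⟩ := XB.map_eval P
  obtain ⟨N0, hN0⟩ := stepanov (k := k) p H.natDegree D (σ β).natDegree hd
  refine ⟨N0 + hbad.toFinset.card + 1, fun r hr => ?_⟩
  have har : r ≤ a * r := Nat.le_mul_of_pos_left r ha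
  obtain ⟨S, hS, hSm⟩ := exists_fixed_finset (k := k) p (a * r) (by omega)
  obtain ⟨w, hwS, hwI⟩ : ∃ w ∈ S, w ∉ hbad.toFinset := by
    by_contra hc
    push Not at hc
    have h1 := Finset.card_le_card (show S ⊆ hbad.toFinset from hc)
    have h2 : a * r < p ^ (a * r) := Nat.lt_pow_self hp.one_lt
    omega
  rw [hSm] at hwS
  have hwirr : Irreducible (P.map (mapRingHom (evalRingHom w))) := by
    by_contra hc
    exact hwI (by simpa using hc)
  have hβw : ∀ x, ((σ β).map (evalRingHom w)).eval x =
      evalEvalRingHom x (x ^ n + w * m.eval x) β := by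
    intro x
    have h1 : (σ β).map (evalRingHom w) = β.eval (X ^ n + C w * m) :=
      RingHom.congr_fun (hspec w) β
    rw [h1]
    have : evalEvalRingHom x (x ^ n + w * m.eval x) =
        (evalRingHom x).comp (evalRingHom (X ^ n + C w * m : k[X])) := by
      apply Polynomial.ringHom_ext
      · intro b; simp
      · simp
    rw [this]; rfl
  have hHw : ∀ x, (evalRingHom x).comp (evalRingHom (X ^ n + C w * m : k[X])) =
      evalEvalRingHom x (x ^ n + w * m.eval x) := by
    intro x
    apply Polynomial.ringHom_ext
    · intro b; simp
    · simp
  obtain ⟨x, y, hx, hy, hb, hxy⟩ := hN0 (a * r) (by omega) (P.map (mapRingHom (evalRingHom w)))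
    (hP.map _) (by rw [hP.natDegree_map, hPdef, hH.natDegree_map]) (hD w) hwirr (by
      rw [hPw]
      conv_rhs => rw [← iterFrob_fix p a r H hfix]
      rw [Polynomial.map_map, Polynomial.map_map]
      congr 1
      apply Polynomial.ringHom_ext
      · intro b; simp
      · simp [hmN, iterateFrobenius_def, hwS])
    ((σ β).map (evalRingHom w)) (by
      intro h
      have h1 := hβw x0
      rw [h, eval_zero, hmx0, mul_zero, add_zero, hev0] at h1
      exact hx0 h1.symm) natDegree_map_le (by
      intro x hx
      rw [hβw] at hx
      rw [hPw, Polynomial.map_map, hHw]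
      exact hsep _ _ hx)
  refine ⟨x, x ^ n + w * m.eval x, y, hx, ?_, hy, ?_, ?_⟩
  · have h1 : m.eval x = x ^ p ^ s - x := by rw [hm]; simp
    rw [h1]
    have := iterateFrobenius_def (R := k) p (a * r)
    rw [← this, map_add, map_mul, map_sub, map_pow, map_pow, this, this, hx, hwS]
  · rwa [← hβw]
  · rw [hPw, eval₂_map, hHw] at hxy
    exact hxy

end

noncomputable section

lemma frac_irred {A : Type*} [CommRing A] [IsDomain A] [UniqueFactorizationMonoid A]
    (F : Type*) [Field F] [Algebra A F] [IsFractionRing A F]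
    (H : A[X]) (hirr : Irreducible H) (hd : H.natDegree ≠ 0) :
    Irreducible (H.map (algebraMap A F)) := by
  have hg : IsGCDMonoid A := inferInstance
  exact ((hirr.isPrimitive hd).irreducible_iff_irreducible_map_fraction_map (K := F)).mp hirr

lemma elim_bezout {A : Type*} [CommRing A] [IsDomain A] [UniqueFactorizationMonoid A]
    (H B : A[X]) (hirr : Irreducible H) (hd : H.natDegree ≠ 0) (hB : ¬ H ∣ B) :
    ∃ (u v : A[X]) (b : A), b ≠ 0 ∧ u * H + v * B = C b := by
  let F := FractionRing A
  have hg : IsGCDMonoid A := inferInstance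
  have hF : Irreducible (H.map (algebraMap A F)) := frac_irred F H hirr hd
  have hnd : ¬ H.map (algebraMap A F) ∣ B.map (algebraMap A F) := fun h =>
    hB ((hirr.isPrimitive hd).dvd_of_fraction_map_dvd_fraction_map (K := F) h)
  obtain ⟨u', v', huv⟩ := hF.coprime_iff_not_dvd.mpr hnd
  obtain ⟨b1, hb1, h1⟩ := IsLocalization.integerNormalization_spec (nonZeroDivisors A) u'
  obtain ⟨b2, hb2, h2⟩ := IsLocalization.integerNormalization_spec (nonZeroDivisors A) v'
  refine ⟨C b2 * IsLocalization.integerNormalization (nonZeroDivisors A) u',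
    C b1 * IsLocalization.integerNormalization (nonZeroDivisors A) v', b1 * b2,
    nonZeroDivisors.ne_zero (mul_mem hb1 hb2), ?_⟩
  apply Polynomial.map_injective (algebraMap A F) (IsFractionRing.injective A F)
  have s1 : b1 • u' = C (algebraMap A F b1) * u' := by
    rw [← Polynomial.smul_eq_C_mul, algebraMap_smul]
  have s2 : b2 • v' = C (algebraMap A F b2) * v' := by
    rw [← Polynomial.smul_eq_C_mul, algebraMap_smul]
  rw [s1] at h1
  rw [s2] at h2
  simp only [Polynomial.map_add, Polynomial.map_mul, map_C, h1, h2, map_mul]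
  linear_combination (C (algebraMap A F b1) * C (algebraMap A F b2)) * huv

/-- `R[X₀,X₁,X₂] → R[X][X][X]` with variables permuted by `e`. -/
def triFun (R : Type*) [CommRing R] (e : Fin 3 ≃ Fin 3) : MvPolynomial (Fin 3) R →+* R[X][X][X] :=
  MvPolynomial.eval₂Hom (((C : R[X][X] →+* R[X][X][X]).comp
    ((C : R[X] →+* R[X][X]).comp (C : R →+* R[X]))) : R →+* R[X][X][X])
    (fun i => (![X, C X, C (C X)] : Fin 3 → R[X][X][X]) (e i))

def triInv (R : Type*) [CommRing R] (e : Fin 3 ≃ Fin 3) : R[X][X][X] →+* MvPolynomial (Fin 3) R :=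
  eval₂RingHom (eval₂RingHom (eval₂RingHom MvPolynomial.C (MvPolynomial.X (e.symm 2)))
    (MvPolynomial.X (e.symm 1))) (MvPolynomial.X (e.symm 0))

lemma triFun_C {R : Type*} [CommRing R] (e : Fin 3 ≃ Fin 3) (a : R) :
    triFun R e (MvPolynomial.C a) = C (C (C a)) := by simp [triFun]

lemma triFun_X {R : Type*} [CommRing R] (e : Fin 3 ≃ Fin 3) (i : Fin 3) :
    triFun R e (MvPolynomial.X i) = ![X, C X, C (C X)] (e i) := by simp [triFun]

lemma triInv_vec {R : Type*} [CommRing R] (e : Fin 3 ≃ Fin 3) (i : Fin 3) :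
    triInv R e (![X, C X, C (C X)] i) = MvPolynomial.X (e.symm i) := by
  fin_cases i <;> simp [triInv]

def tri (R : Type*) [CommRing R] (e : Fin 3 ≃ Fin 3) :
    MvPolynomial (Fin 3) R ≃+* R[X][X][X] :=
  RingEquiv.ofRingHom (triFun R e) (triInv R e)
    (by
      apply Polynomial.ringHom_ext'
      · apply Polynomial.ringHom_ext'
        · apply Polynomial.ringHom_ext'
          · ext1 a; simp [triInv, triFun_C]
          · simp [triInv, triFun_X]
        · simp [triInv, triFun_X]
      · simp [triInv, triFun_X])
    (by
      apply MvPolynomial.ringHom_ext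
      · intro a; simp [triInv, triFun_C]
      · intro i; simp [triFun_X, triInv_vec])

lemma tri_C {R : Type*} [CommRing R] (e : Fin 3 ≃ Fin 3) (a : R) :
    tri R e (MvPolynomial.C a) = C (C (C a)) := triFun_C e a

lemma tri_X {R : Type*} [CommRing R] (e : Fin 3 ≃ Fin 3) (i : Fin 3) :
    tri R e (MvPolynomial.X i) = ![X, C X, C (C X)] (e i) := triFun_X e i

lemma tri_eval {R : Type*} [CommRing R] (e : Fin 3 ≃ Fin 3) (x z y : R)
    (u : MvPolynomial (Fin 3) R) :
    eval₂ (evalEvalRingHom x z) y (tri R e u) =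
      MvPolynomial.eval (fun i => ![y, z, x] (e i)) u := by
  have : (eval₂RingHom (evalEvalRingHom x z) y).comp (tri R e : _ →+* _) =
      MvPolynomial.eval (fun i => ![y, z, x] (e i)) := by
    apply MvPolynomial.ringHom_ext
    · intro a; simp [tri_C]
    · intro i
      simp only [RingHom.comp_apply, RingHom.coe_coe, tri_X, MvPolynomial.eval_X]
      generalize e i = j
      fin_cases j <;> simp
  exact congrArg (fun φ => φ u) this

lemma tri_map {R : Type*} [CommRing R] (e : Fin 3 ≃ Fin 3) (φ : R →+* R)
    (u : MvPolynomial (Fin 3) R) :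
    (tri R e u).map (mapRingHom (mapRingHom φ)) = tri R e (MvPolynomial.map φ u) := by
  have : (mapRingHom (mapRingHom (mapRingHom φ))).comp (tri R e : _ →+* _) =
      (tri R e : MvPolynomial (Fin 3) R →+* R[X][X][X]).comp (MvPolynomial.map φ) := by
    apply MvPolynomial.ringHom_ext
    · intro a; simp [tri_C]
    · intro i
      simp only [RingHom.comp_apply, RingHom.coe_coe, tri_X, MvPolynomial.map_X]
      generalize e i = j
      fin_cases j <;> simp
  exact congrArg (fun φ => φ u) this

lemma tri_deriv {R : Type*} [CommRing R] (e : Fin 3 ≃ Fin 3) (u : MvPolynomial (Fin 3) R) :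
    derivative (tri R e u) = tri R e (MvPolynomial.pderiv (e.symm 0) u) := by
  induction u using MvPolynomial.induction_on with
  | C a => simp [tri_C]
  | add p q hp hq => simp [hp, hq]
  | mul_X p i hp =>
    have hX : derivative (tri R e (MvPolynomial.X i)) =
        tri R e (MvPolynomial.pderiv (e.symm 0) (MvPolynomial.X i)) := by
      rw [tri_X, MvPolynomial.pderiv_X]
      by_cases h : e i = 0
      · have : i = e.symm 0 := by rw [← h]; simp
        rw [h, ← this]; simp
      · have : i ≠ e.symm 0 := fun h' => h (by rw [h']; simp)
        rw [Pi.single_eq_of_ne this, map_zero]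
        revert h
        generalize e i = j
        fin_cases j <;> simp
    rw [map_mul, derivative_mul, hp, hX, MvPolynomial.pderiv_mul, map_add, map_mul, map_mul]

lemma exists_pderiv_ne_zero {k : Type*} [Field k] [IsAlgClosed k] (p : ℕ) [Fact p.Prime] [CharP k p]
    (g : MvPolynomial (Fin 3) k) (hg : Irreducible g) :
    ∃ v, MvPolynomial.pderiv v g ≠ 0 := by
  by_contra! hcon
  have hp : p.Prime := Fact.out
  have hdiv : ∀ s ∈ g.support, ∀ i, p ∣ s i := by
    intro s hs i
    by_contra hnd
    have hsi : s i ≠ 0 := fun h => hnd (h ▸ dvd_zero p)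
    have h1 := congrArg (MvPolynomial.coeff (s - Finsupp.single i 1)) (hcon i)
    have h2 : s - Finsupp.single i 1 + Finsupp.single i 1 = s :=
      tsub_add_cancel_of_le (by
        rw [Finsupp.single_le_iff]; omega)
    rw [MvPolynomial.coeff_pderiv, h2, MvPolynomial.coeff_zero] at h1
    have h3 : ((s i : ℕ) : k) ≠ 0 := fun h => hnd ((CharP.cast_eq_zero_iff k p _).mp h)
    have h4 : (((s - Finsupp.single i 1 : Fin 3 →₀ ℕ) i : ℕ) : k) + 1 = ((s i : ℕ) : k) := by
      rw [← Nat.cast_succ]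
      congr 1
      simp
      omega
    rw [h4] at h1
    simp [h3] at h1
    exact (MvPolynomial.mem_support_iff.mp hs) h1
  choose rt hrt using fun a : k => IsAlgClosed.exists_pow_nat_eq a hp.pos
  let h : MvPolynomial (Fin 3) k :=
    ∑ s ∈ g.support, MvPolynomial.monomial (s.mapRange (· / p) (Nat.zero_div p)) (rt (g.coeff s))
  have hh : h ^ p = g := by
    rw [sum_pow_char]
    conv_rhs => rw [g.as_sum]
    refine Finset.sum_congr rfl fun s hs => ?_
    rw [MvPolynomial.monomial_pow, hrt]
    congr 2
    ext i
    simp [Nat.mul_div_cancel' (hdiv s hs i)]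
  exact not_irreducible_pow hp.one_lt.ne' (hh ▸ hg)

end

noncomputable section

lemma intNorm_irred {A : Type*} [CommRing A] [IsDomain A] [UniqueFactorizationMonoid A]
    (H : A[X]) (hirr : Irreducible H) (hd : H.natDegree ≠ 0) :
    Irreducible H.integralNormalization := by
  let F := FractionRing A
  have hF : Irreducible (H.map (algebraMap A F)) := frac_irred F H hirr hd
  have hlc : algebraMap A F H.leadingCoeff ≠ 0 := by
    simpa using hirr.ne_zero
  have hm := monic_integralNormalization hirr.ne_zero
  refine hm.irreducible_of_irreducible_map (algebraMap A F) _ ?_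
  rw [← integralNormalization_map (algebraMap A F) H hlc]
  set P := H.map (algebraMap A F) with hP
  have hdP : P.natDegree = H.natDegree := by
    rw [hP, natDegree_map_eq_of_injective (IsFractionRing.injective A F)]
  set c := P.leadingCoeff with hc
  have hc0 : c ≠ 0 := by rw [hc]; simpa using hF.ne_zero
  have key : P.integralNormalization.comp (C c * X) = C (c ^ (P.natDegree - 1)) * P := by
    have := integralNormalization_eval₂_leadingCoeff_mul (p := P) (by omega) C X
    rw [comp, this, eval₂_C_X, C_pow]
  let _ := invertibleOfNonzero hc0
  rw [← MulEquiv.irreducible_iff (algEquivCMulXAddC c 0)]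
  have h2 : algEquivCMulXAddC c 0 P.integralNormalization = C (c ^ (P.natDegree - 1)) * P := by
    rw [← key]; simp [algEquivCMulXAddC, Polynomial.comp, aeval_def]
  rw [h2]
  refine (irreducible_isUnit_mul ?_).mpr hF
  rw [isUnit_C]
  exact (pow_ne_zero _ hc0).isUnit

lemma intNorm_deriv {A : Type*} [CommRing A] [IsDomain A]
    (H : A[X]) (hd : derivative H ≠ 0) :
    derivative H.integralNormalization ≠ 0 := by
  intro h
  apply hd
  have h0 : H ≠ 0 := by rintro rfl; simp at hd
  ext i
  have h1 := congrArg (fun q => q.coeff i) h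
  simp only [coeff_derivative, coeff_zero, integralNormalization_coeff] at h1 ⊢
  split_ifs at h1 with hdeg
  · rw [one_mul] at h1; rw [h1, mul_zero]
  · have : H.leadingCoeff ^ (H.natDegree - 1 - (i+1)) ≠ 0 := pow_ne_zero _ (by simpa using h0)
    rw [mul_assoc, mul_comm (_ ^ _), ← mul_assoc] at h1
    exact (mul_eq_zero.mp h1).resolve_right this

lemma sep_exists {A : Type*} [CommRing A] [IsDomain A] [UniqueFactorizationMonoid A]
    (H : A[X]) (hm : H.Monic) (hirr : Irreducible H) (hd : derivative H ≠ 0) :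
    ∃ δ : A, δ ≠ 0 ∧ ∀ {k : Type _} [Field k] (φ : A →+* k), φ δ ≠ 0 → (H.map φ).Separable := by
  have hn : H.natDegree ≠ 0 := fun h => hd (derivative_of_natDegree_zero h)
  obtain ⟨u, v, b, hb, h⟩ := elim_bezout H (derivative H) hirr hn
    (hm.not_dvd_of_natDegree_lt hd (natDegree_derivative_lt hn))
  refine ⟨b, hb, fun {k} _ φ hφ => ?_⟩
  have h1 := congrArg (Polynomial.map φ) h
  simp only [Polynomial.map_add, Polynomial.map_mul, map_C] at h1
  refine ⟨C (φ b)⁻¹ * u.map φ, C (φ b)⁻¹ * v.map φ, ?_⟩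
  rw [derivative_map]
  have h2 : C (φ b)⁻¹ * C (φ b) = (1 : k[X]) := by
    rw [← C_mul, inv_mul_cancel₀ hφ, C_1]
  linear_combination C (φ b)⁻¹ * h1 + h2

lemma evalEval_fix {k : Type*} [Field k] (σ : k →+* k) (b : k[X][X])
    (hb : b.map (mapRingHom σ) = b) (x z : k) (hx : σ x = x) (hz : σ z = z) :
    σ (evalEvalRingHom x z b) = evalEvalRingHom x z b := by
  conv_rhs => rw [← hb]
  have : σ.comp (evalEvalRingHom x z) = (evalEvalRingHom x z).comp (mapRingHom (mapRingHom σ)) := by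
    apply Polynomial.ringHom_ext'
    · apply Polynomial.ringHom_ext'
      · ext1 a; simp
      · simp [hx]
    · simp [hz]
  exact congrArg (fun φ => φ b) this

theorem thmB {k : Type*} [Field k] [IsAlgClosed k] (p : ℕ) [Fact p.Prime] [CharP k p]
    (halg : ∀ x : k, ∃ s, 0 < s ∧ x ^ p ^ s = x) (a : ℕ) (ha : 0 < a)
    (H B : k[X][X][X]) (hirr : Irreducible H) (hd : derivative H ≠ 0)
    (hfix : H.map (mapRingHom (mapRingHom (iterateFrobenius k p a))) = H)
    (hB : ¬ H ∣ B) :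
    ∃ N0 : ℕ, ∀ r ≥ N0, ∃ x z y : k, x ^ p ^ (a * r) = x ∧ z ^ p ^ (a * r) = z ∧
      y ^ p ^ (a * r) = y ∧ eval₂ (evalEvalRingHom x z) y H = 0 ∧
      eval₂ (evalEvalRingHom x z) y B ≠ 0 := by
  have hn : H.natDegree ≠ 0 := fun h => hd (derivative_of_natDegree_zero h)
  have hlc : H.leadingCoeff ≠ 0 := by simpa using hirr.ne_zero
  obtain ⟨u, v, b, hb, huv⟩ := elim_bezout H B hirr hn hB
  have hmon := monic_integralNormalization hirr.ne_zero
  have hI := intNorm_irred H hirr hn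
  obtain ⟨δ, hδ, hsep⟩ := sep_exists _ hmon hI (intNorm_deriv H hd)
  have hinj : Function.Injective (mapRingHom (mapRingHom (iterateFrobenius k p a))) :=
    Polynomial.map_injective _ (Polynomial.map_injective _ (RingHom.injective _))
  have hlcfix : (mapRingHom (mapRingHom (iterateFrobenius k p a))) H.leadingCoeff
      = H.leadingCoeff := by
    conv_rhs => rw [← hfix]
    rw [leadingCoeff_map_of_injective hinj]
  obtain ⟨N0, hN0⟩ := thmA p halg a ha H.integralNormalization hmon hI
    (by rw [← integralNormalization_map _ H (by rw [hlcfix]; exact hlc), hfix])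
    (δ * H.leadingCoeff * b) (mul_ne_zero (mul_ne_zero hδ hlc) hb)
    (by
      intro x z h
      apply hsep
      intro h0
      apply h
      rw [map_mul, map_mul, h0, zero_mul, zero_mul])
  refine ⟨N0, fun r hr => ?_⟩
  obtain ⟨x, z, y, hx, hz, hy, hβ, h0⟩ := hN0 r hr
  set ev := evalEvalRingHom x z with hev
  have hl : ev H.leadingCoeff ≠ 0 := fun h => hβ (by rw [map_mul, map_mul, h]; simp)
  have hbb : ev b ≠ 0 := fun h => hβ (by rw [map_mul, h]; simp)
  have hlfix : ev H.leadingCoeff ^ p ^ (a * r) = ev H.leadingCoeff := by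
    have hf2 := iterFrob_fix p a r H hfix
    have hinj2 : Function.Injective (mapRingHom (mapRingHom (iterateFrobenius k p (a * r)))) :=
      Polynomial.map_injective _ (Polynomial.map_injective _ (RingHom.injective _))
    have hlc2 : (mapRingHom (mapRingHom (iterateFrobenius k p (a * r)))) H.leadingCoeff
        = H.leadingCoeff := by
      conv_rhs => rw [← hf2]
      rw [leadingCoeff_map_of_injective hinj2]
    have := evalEval_fix (iterateFrobenius k p (a * r)) H.leadingCoeff hlc2 x z
      (by rw [iterateFrobenius_def, hx]) (by rw [iterateFrobenius_def, hz])
    rwa [iterateFrobenius_def] at this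
  have hyy : y = ev H.leadingCoeff * (y / ev H.leadingCoeff) := by field_simp
  have hH0 : eval₂ ev (y / ev H.leadingCoeff) H = 0 := by
    rw [hyy, integralNormalization_eval₂_leadingCoeff_mul (by omega)] at h0
    exact (mul_eq_zero.mp h0).resolve_left (pow_ne_zero _ hl)
  refine ⟨x, z, y / ev H.leadingCoeff, hx, hz, ?_, hH0, ?_⟩
  · rw [div_pow, hy, hlfix]
  · intro hB0
    have := congrArg (eval₂ ev (y / ev H.leadingCoeff)) huv
    rw [eval₂_add, eval₂_mul, eval₂_mul, hH0, hB0, eval₂_C] at this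
    simp at this
    exact hbb this.symm

theorem thmC {k : Type*} [Field k] [IsAlgClosed k] (p : ℕ) [Fact p.Prime] [CharP k p]
    (halg : ∀ x : k, ∃ s, 0 < s ∧ x ^ p ^ s = x) (a : ℕ) (ha : 0 < a)
    (g B : MvPolynomial (Fin 3) k) (hirr : Irreducible g)
    (hfix : MvPolynomial.map (iterateFrobenius k p a) g = g)
    (hB : ¬ g ∣ B) :
    ∃ N0 : ℕ, ∀ r ≥ N0, ∃ P : Fin 3 → k, (∀ i, P i ^ p ^ (a * r) = P i) ∧
      MvPolynomial.eval P g = 0 ∧ MvPolynomial.eval P B ≠ 0 := by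
  obtain ⟨v, hv⟩ := exists_pderiv_ne_zero p g hirr
  let e : Fin 3 ≃ Fin 3 := Equiv.swap 0 v
  have he : e.symm 0 = v := by simp [e]
  obtain ⟨N0, hN0⟩ := thmB p halg a ha (tri k e g) (tri k e B)
    ((MulEquiv.irreducible_iff (tri k e)).mpr hirr)
    (by rw [tri_deriv, he]; simpa using hv)
    (by rw [tri_map, hfix])
    (by rwa [map_dvd_iff])
  refine ⟨N0, fun r hr => ?_⟩
  obtain ⟨x, z, y, hx, hz, hy, h1, h2⟩ := hN0 r hr
  rw [tri_eval] at h1 h2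
  refine ⟨_, fun i => ?_, h1, h2⟩
  generalize e i = j
  fin_cases j <;> simp [hx, hy, hz]

end

noncomputable section

lemma lin1_irred {k : Type*} [Field k] :
    Irreducible (MvPolynomial.X 0 - MvPolynomial.X 1 : MvPolynomial (Fin 3) k) := by
  rw [← MulEquiv.irreducible_iff (tri k (Equiv.refl _))]
  have : tri k (Equiv.refl _) (MvPolynomial.X 0 - MvPolynomial.X 1) = X - C X := by
    rw [map_sub, tri_X, tri_X]; simp
  rw [this]
  exact irreducible_X_sub_C _

lemma lin2_irred {k : Type*} [Field k] :
    Irreducible (MvPolynomial.X 0 - MvPolynomial.X 2 : MvPolynomial (Fin 3) k) := by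
  rw [← MulEquiv.irreducible_iff (tri k (Equiv.refl _))]
  have : tri k (Equiv.refl _) (MvPolynomial.X 0 - MvPolynomial.X 2) = X - C (C X) := by
    rw [map_sub, tri_X, tri_X]; simp
  rw [this]
  exact irreducible_X_sub_C _

lemma line_restrict {K Ω : Type*} [Field K] [Field Ω] [Algebra K Ω]
    (f : K[X]) (G : MvPolynomial (Fin 3) K)
    (hG : (MvPolynomial.X 0 - MvPolynomial.X 1) * (MvPolynomial.X 0 - MvPolynomial.X 2) * G =
      Polynomial.aeval (MvPolynomial.X 0) f - Polynomial.aeval (MvPolynomial.X 1) f -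
        Polynomial.aeval (MvPolynomial.X 2) f +
        Polynomial.aeval (-MvPolynomial.X 0 + MvPolynomial.X 1 + MvPolynomial.X 2) f) (a b : Ω) :
    (X - C a) * (X - C b) * MvPolynomial.aeval ![X, C a, C b]
        (MvPolynomial.map (algebraMap K Ω) G) =
      f.map (algebraMap K Ω) - C (aeval a f) - C (aeval b f) +
        (f.map (algebraMap K Ω)).comp (-X + C a + C b) := by
  have h := congrArg (MvPolynomial.aeval (R := K) (![X, C a, C b] : Fin 3 → Polynomial Ω)) hG
  rw [MvPolynomial.aeval_map_algebraMap]
  simp only [map_mul, map_sub, map_add, ← Polynomial.aeval_algHom_apply, map_neg,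
    MvPolynomial.aeval_X] at h
  have hc : ∀ q : Polynomial Ω, aeval q f = (f.map (algebraMap K Ω)).comp q := by
    intro q
    rw [comp, eval₂_map]; rfl
  simp only [hc] at h
  simp at h
  rw [h]

lemma not_dvd_diag {K Ω : Type*} [Field K] [Field Ω] [Infinite Ω] [Algebra K Ω]
    (f : K[X]) (hf : ¬ ∃ c : K, Polynomial.derivative f = C c)
    (G : MvPolynomial (Fin 3) K)
    (hG : (MvPolynomial.X 0 - MvPolynomial.X 1) * (MvPolynomial.X 0 - MvPolynomial.X 2) * G =
      Polynomial.aeval (MvPolynomial.X 0) f - Polynomial.aeval (MvPolynomial.X 1) f -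
        Polynomial.aeval (MvPolynomial.X 2) f +
        Polynomial.aeval (-MvPolynomial.X 0 + MvPolynomial.X 1 + MvPolynomial.X 2) f)
    (g : MvPolynomial (Fin 3) Ω) (hg : Irreducible g)
    (hgG : g ∣ MvPolynomial.map (algebraMap K Ω) G) :
    ¬ g ∣ (MvPolynomial.X 0 - MvPolynomial.X 1) * (MvPolynomial.X 0 - MvPolynomial.X 2) := by
  intro hdvd
  have main : ∀ a b : Ω, eval a (derivative (f.map (algebraMap K Ω))) =
      eval b (derivative (f.map (algebraMap K Ω))) := by
    intro a b
    have h := congrArg derivative (line_restrict f G hG a b)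
    rcases hg.prime.dvd_or_dvd hdvd with h1 | h1
    · obtain ⟨W, hW⟩ := (hg.dvd_symm lin1_irred h1).trans hgG
      rw [hW] at h
      have h2 := congrArg (eval a) h
      simp [derivative_comp] at h2
      simp only [derivative_map, eval_map_algebraMap]
      linear_combination -h2
    · obtain ⟨W, hW⟩ := (hg.dvd_symm lin2_irred h1).trans hgG
      rw [hW] at h
      have h2 := congrArg (eval b) h
      simp [derivative_comp] at h2
      simp only [derivative_map, eval_map_algebraMap]
      linear_combination h2
  apply hf
  have h3 : derivative (f.map (algebraMap K Ω)) = C (eval 0 (derivative (f.map (algebraMap K Ω)))) :=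
    Polynomial.funext fun a => by rw [eval_C]; exact main a 0
  refine ⟨(derivative f).coeff 0, ?_⟩
  apply Polynomial.map_injective (algebraMap K Ω) (algebraMap K Ω).injective
  rw [← derivative_map, h3, map_C, ← coeff_zero_eq_eval_zero, derivative_map, coeff_map]

lemma halg_closure (K : Type*) [Field K] [Finite K] (p : ℕ) [CharP K p]
    (x : AlgebraicClosure K) : ∃ s, 0 < s ∧ x ^ p ^ s = x := by
  have hx : IsIntegral K x := (Algebra.IsAlgebraic.isAlgebraic x).isIntegral
  let E := IntermediateField.adjoin K {x}
  have : FiniteDimensional K E := IntermediateField.adjoin.finiteDimensional hx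
  have : Finite E := Module.finite_of_finite K
  have := Fintype.ofFinite E
  have : CharP E p := charP_of_injective_algebraMap (algebraMap K E).injective p
  obtain ⟨n, -, hn⟩ := FiniteField.card E p
  refine ⟨n, n.pos, ?_⟩
  have := FiniteField.pow_card (⟨x, IntermediateField.mem_adjoin_simple_self K x⟩ : E)
  rw [hn] at this
  exact congrArg Subtype.val this

/-- fixed field of a power of Frobenius. -/
def fixField (K Ω : Type*) [Field K] [Field Ω] [Algebra K Ω] (p : ℕ) [Fact p.Prime] [CharP Ω p]
    (N : ℕ) (hK : ∀ c : K, c ^ p ^ N = c) : IntermediateField K Ω where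
  carrier := {x | x ^ p ^ N = x}
  mul_mem' := by
    intro x y hx hy
    simp only [Set.mem_ofPred_eq] at *
    rw [mul_pow, hx, hy]
  add_mem' := by
    intro x y hx hy
    simp only [Set.mem_ofPred_eq] at *
    rw [add_pow_char_pow, hx, hy]
  algebraMap_mem' := by
    intro c
    simp only [Set.mem_ofPred_eq]
    rw [← map_pow, hK]
  inv_mem' := by
    intro x hx
    simp only [Set.mem_ofPred_eq] at *
    rw [inv_pow, hx]

theorem not_exceptional_planar_of_abs_irreducible_factor
    (K : Type) [Field K] [Fintype K] (hodd : Odd (Fintype.card K))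
    (f : K[X]) (hf : ¬ ∃ c : K, Polynomial.derivative f = C c)
    (G : MvPolynomial (Fin 3) K)
    (hG : (MvPolynomial.X 0 - MvPolynomial.X 1) * (MvPolynomial.X 0 - MvPolynomial.X 2) * G =
      Polynomial.aeval (MvPolynomial.X 0) f - Polynomial.aeval (MvPolynomial.X 1) f -
        Polynomial.aeval (MvPolynomial.X 2) f +
        Polynomial.aeval (-MvPolynomial.X 0 + MvPolynomial.X 1 + MvPolynomial.X 2) f)
    (hirr : ∃ g : MvPolynomial (Fin 3) K, g ∣ G ∧
      Irreducible (MvPolynomial.map (algebraMap K (AlgebraicClosure K)) g)) :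
    ¬ IsExceptionalPlanarOdd f := by
  intro hex
  obtain ⟨g, hgG, hg⟩ := hirr
  obtain ⟨p, hpK⟩ := CharP.exists K
  obtain ⟨a, hp, hq⟩ := FiniteField.card K p
  have : Fact p.Prime := ⟨hp⟩
  let Ω := AlgebraicClosure K
  have hcΩ : CharP Ω p := charP_of_injective_algebraMap (algebraMap K Ω).injective p
  have hgG' := map_dvd (MvPolynomial.map (algebraMap K Ω)) hgG
  have hinf : Infinite Ω := IsAlgClosed.instInfinite
  have hnd := not_dvd_diag f hf G hG _ hg hgG'
  obtain ⟨N0, hN0⟩ := thmC p (halg_closure K p) a a.pos _ _ hg (by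
    rw [MvPolynomial.map_map]
    congr 2
    ext1 c
    rw [RingHom.comp_apply, iterateFrobenius_def, ← map_pow, ← hq, FiniteField.pow_card]) hnd
  obtain ⟨r, ⟨hr0, hr⟩, hrN⟩ := hex.exists_gt N0
  obtain ⟨P, hP, hPg, hPB⟩ := hN0 r hrN.le
  have hK : ∀ c : K, c ^ p ^ ((a : ℕ) * r) = c := by
    intro c
    rw [pow_mul, ← hq, FiniteField.pow_card_pow]
  let L := fixField K Ω p (a * r) hK
  obtain ⟨S, hS, hmem⟩ := exists_fixed_finset (k := Ω) p (a * r)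
    (Nat.mul_ne_zero a.pos.ne' hr0.ne')
  have hmemL : ∀ x : Ω, x ∈ S ↔ x ∈ L := fun x => hmem x
  let _ : Fintype L := Fintype.subtype S hmemL
  have hcard : Fintype.card L = Fintype.card K ^ r := by
    rw [Fintype.card_of_subtype S hmemL, hS, hq, pow_mul]
  have hplan := hr L hcard
  obtain ⟨x0, hx0⟩ : ∃ x : L, (x : Ω) = P 0 := ⟨⟨P 0, hP 0⟩, rfl⟩
  obtain ⟨x1, hx1⟩ : ∃ x : L, (x : Ω) = P 1 := ⟨⟨P 1, hP 1⟩, rfl⟩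
  obtain ⟨x2, hx2⟩ : ∃ x : L, (x : Ω) = P 2 := ⟨⟨P 2, hP 2⟩, rfl⟩
  simp only [map_mul, map_sub, MvPolynomial.eval_X, ← hx0, ← hx1, ← hx2] at hPB
  have h01 : x0 - x1 ≠ 0 := fun h => hPB (by
    rw [sub_eq_zero.mp h]; simp)
  have h02 : x0 - x2 ≠ 0 := fun h => hPB (by
    rw [sub_eq_zero.mp h]; simp)
  have hG0 : MvPolynomial.aeval P G = 0 := by
    obtain ⟨W, hW⟩ := hgG'
    rw [← MvPolynomial.aeval_map_algebraMap Ω, hW, map_mul]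
    have : MvPolynomial.aeval P (MvPolynomial.map (algebraMap K Ω) g) = 0 := by
      rw [MvPolynomial.aeval_eq_eval]; exact hPg
    rw [this, zero_mul]
  have hΦ := congrArg (MvPolynomial.aeval (R := K) P) hG
  rw [map_mul, hG0, mul_zero] at hΦ
  simp only [map_sub, map_add, ← Polynomial.aeval_algHom_apply, map_neg,
    MvPolynomial.aeval_X, ← hx0, ← hx1, ← hx2] at hΦ
  have hval : ∀ y : L, aeval (y : Ω) f = ((aeval y f : L) : Ω) := fun y =>
    Polynomial.aeval_algHom_apply L.val y f
  have hΦL : 0 = aeval x0 f - aeval x1 f - aeval x2 f + aeval (-x0 + x1 + x2) f := by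
    apply Subtype.val_injective
    have := hval (-x0 + x1 + x2)
    push_cast [← hval] at this ⊢
    rw [hΦ]
  have hinj := (hplan (x0 - x1) h01).1 (a₁ := x1) (a₂ := -x0 + x1 + x2) (by
    simp only
    rw [show x1 + (x0 - x1) = x0 by ring, show -x0 + x1 + x2 + (x0 - x1) = x2 by ring]
    linear_combination -hΦL)
  exact h02 (by linear_combination hinj)

end
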